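/- arXiv:1206.3672 — 2 statements merged into one kernel-verified Lean document; each statement's English description precedes it below -/
import Mathlib

section
/- Let lambda = f * m for a compactly supported density f in L^1(M,m) (so lambda is a finite, compactly supported measure absolutely continuous with respect to m), and let mu be a finite measure with compact support and mu(M) <= lambda(M). Then there exists a unique semicoupling q of lambda and mu minimizing Cost, and it is given by q = (id, T)_*(rho * lambda) for some measurable map T : M -> M union {eth} (eth an added cemetery point) and some density rho with values in [0,1]. -/
/-!
Existence follows from Prokhorov's theorem (`exists_optimal_semicoupling`).

The structure and the uniqueness of optimizers come from leaving unused mass at rest. If `q` is an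
optimal semicoupling and `ka = lam - q.fst` is the mass it does not use, then `q` plus the image
of `ka` under the diagonal is a coupling of `lam` and `mu + ka` with the same cost as `q`, because
`c(x,x) = 0`. It is optimal: every coupling of `lam` and `mu + ka` contains a semicoupling of `lam`
and `mu` (`IsCoupling.exists_semicoupling_le`). By the Monge assumption it is therefore induced by
a map `S`, so `q` is carried by the graph of `S` and `S` fixes `ka`-almost every point
(`exists_map_of_optimal`). This yields the transport map `T = some ∘ S`, with `ρ` the density of
`q.fst` with respect to `lam`.

For uniqueness, apply this to the midpoint of two optimal semicouplings: a single map `S` carries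
both of them and fixes both unused masses `ka₁`, `ka₂`. Pushing `lam` forward by `S` gives
`mu + ka₁ = mu + ka₂`. Finite measures cancel, so the first marginals agree, and with them the two
semicouplings (`optimal_semicoupling_unique`).
-/


open MeasureTheory ENNReal Filter Topology
open scoped Pointwise ENNReal symmDiff

/-- The cost function on `M × M` induced by a scale function `ϑ` : `c(x,y) = ϑ(d(x,y))`. -/
noncomputable def costFn {M : Type*} [MetricSpace M] (ϑ : ℝ → ℝ) (p : M × M) : ℝ≥0∞ :=
  ENNReal.ofReal (ϑ (dist p.1 p.2))

/-- A scale function: continuous, strictly increasing on `[0,∞)`, `ϑ(0)=0`, `ϑ(r)→∞`. -/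
structure IsScaleFn (ϑ : ℝ → ℝ) : Prop where
  continuous : Continuous ϑ
  strictMono : StrictMonoOn ϑ (Set.Ici (0:ℝ))
  map_zero : ϑ 0 = 0
  tendsto_atTop : Tendsto ϑ atTop atTop

/-- Total transportation cost of a transport plan `q` for cost `c(x,y)=ϑ(d(x,y))`. -/
noncomputable def Cost {M : Type*} [MetricSpace M] [MeasurableSpace M]
    (ϑ : ℝ → ℝ) (q : Measure (M × M)) : ℝ≥0∞ :=
  ∫⁻ p, costFn ϑ p ∂q

/-- `q` is a semicoupling of `lam` and `mu`: first marginal `≤ lam`, second marginal `= mu`. -/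
def IsSemicoupling {M : Type*} [MeasurableSpace M] (lam mu : Measure M)
    (q : Measure (M × M)) : Prop :=
  q.fst ≤ lam ∧ q.snd = mu

/-- `q` is a coupling of `lam` and `mu`. -/
def IsCoupling {M : Type*} [MeasurableSpace M] (lam mu : Measure M)
    (q : Measure (M × M)) : Prop :=
  q.fst = lam ∧ q.snd = mu

/-- A measure is compactly supported if it vanishes outside some compact set. -/
def HasCompactSupportMeas {M : Type*} [TopologicalSpace M] [MeasurableSpace M]
    (μ : Measure M) : Prop :=
  ∃ K : Set M, IsCompact K ∧ μ Kᶜ = 0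

/-- The support of a measure: points all of whose neighbourhoods have positive mass. -/
def msupport {M : Type*} [TopologicalSpace M] [MeasurableSpace M] (μ : Measure M) : Set M :=
  {x | ∀ U ∈ nhds x, 0 < μ U}

/-- Monge uniqueness assumption: for compactly supported probability measures `lam ≪ m` and
`mu`, the Monge-Kantorovich problem with cost `ϑ ∘ d` has a unique minimizer, induced by a
measurable transport map. -/
def MongeUnique {M : Type*} [MetricSpace M] [MeasurableSpace M]
    (m : Measure M) (ϑ : ℝ → ℝ) : Prop :=
  ∀ lam mu : Measure M, IsProbabilityMeasure lam → IsProbabilityMeasure mu →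
    HasCompactSupportMeas lam → HasCompactSupportMeas mu → lam ≪ m →
    (∃! q : Measure (M × M), IsCoupling lam mu q ∧
        ∀ q' : Measure (M × M), IsCoupling lam mu q' → Cost ϑ q ≤ Cost ϑ q') ∧
    (∀ q : Measure (M × M),
      (IsCoupling lam mu q ∧ ∀ q' : Measure (M × M), IsCoupling lam mu q' →
          Cost ϑ q ≤ Cost ϑ q') →
      ∃ T : M → M, Measurable T ∧ q = Measure.map (fun x => (x, T x)) lam)

/-- The natural σ-algebra on `M ∪ {ð}` (modelled as `Option M`), where the added cemetery point
`ð = none` is an isolated measurable atom. -/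
instance optionMeasurableSpace {α : Type*} [m : MeasurableSpace α] :
    MeasurableSpace (Option α) := m.map some

section SemicouplingHelpers

variable {M : Type*}

/-! ### Scaling and mass of semicouplings -/

lemma cost_smul [MetricSpace M] [MeasurableSpace M] (ϑ : ℝ → ℝ) (a : ℝ≥0∞)
    (q : Measure (M × M)) : Cost ϑ (a • q) = a * Cost ϑ q := by
  simp [Cost, lintegral_smul_measure]

lemma cost_add [MetricSpace M] [MeasurableSpace M] (ϑ : ℝ → ℝ)
    (q q' : Measure (M × M)) : Cost ϑ (q + q') = Cost ϑ q + Cost ϑ q' := by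
  simp [Cost, lintegral_add_measure]

lemma measure_fst_smul [MeasurableSpace M] (a : ℝ≥0∞) (q : Measure (M × M)) :
    (a • q).fst = a • q.fst := by
  simp [Measure.fst, Measure.map_smul]

lemma measure_snd_smul [MeasurableSpace M] (a : ℝ≥0∞) (q : Measure (M × M)) :
    (a • q).snd = a • q.snd := by
  simp [Measure.snd, Measure.map_smul]

lemma IsSemicoupling.smul [MeasurableSpace M] {lam mu : Measure M} {q : Measure (M × M)}
    (h : IsSemicoupling lam mu q) (a : ℝ≥0∞) : IsSemicoupling (a • lam) (a • mu) (a • q) := by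
  refine ⟨?_, ?_⟩
  · rw [measure_fst_smul]
    intro s
    simp only [Measure.smul_apply, smul_eq_mul]
    exact mul_le_mul' le_rfl (h.1 s)
  · rw [measure_snd_smul, h.2]

lemma IsCoupling.smul [MeasurableSpace M] {lam mu : Measure M} {q : Measure (M × M)}
    (h : IsCoupling lam mu q) (a : ℝ≥0∞) : IsCoupling (a • lam) (a • mu) (a • q) :=
  ⟨by rw [measure_fst_smul, h.1], by rw [measure_snd_smul, h.2]⟩

lemma IsSemicoupling.measure_univ [MeasurableSpace M] {lam mu : Measure M}
    {q : Measure (M × M)} (h : IsSemicoupling lam mu q) : q Set.univ = mu Set.univ := by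
  rw [← h.2, Measure.snd_univ]

lemma IsSemicoupling.isFiniteMeasure [MeasurableSpace M] {lam mu : Measure M} [IsFiniteMeasure mu]
    {q : Measure (M × M)} (h : IsSemicoupling lam mu q) : IsFiniteMeasure q :=
  ⟨by rw [h.measure_univ]; exact measure_lt_top _ _⟩

lemma HasCompactSupportMeas.of_absolutelyContinuous [TopologicalSpace M] [MeasurableSpace M]
    {μ ν : Measure M} (h : HasCompactSupportMeas μ) (hν : ν ≪ μ) : HasCompactSupportMeas ν := by
  obtain ⟨K, hK, h0⟩ := h
  exact ⟨K, hK, hν h0⟩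

lemma HasCompactSupportMeas.add [TopologicalSpace M] [MeasurableSpace M]
    {μ ν : Measure M} (hμ : HasCompactSupportMeas μ) (hν : HasCompactSupportMeas ν) :
    HasCompactSupportMeas (μ + ν) := by
  obtain ⟨K, hK, h0⟩ := hμ
  obtain ⟨L, hL, h1⟩ := hν
  refine ⟨K ∪ L, hK.union hL, ?_⟩
  rw [Measure.add_apply, add_eq_zero]
  exact ⟨measure_mono_null (by simp) h0, measure_mono_null (by simp) h1⟩

/-- The normalised product measure is a semicoupling whenever the masses allow one. -/
lemma exists_semicoupling [MeasurableSpace M] (lam mu : Measure M) [IsFiniteMeasure lam]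
    [IsFiniteMeasure mu] (hmass : mu Set.univ ≤ lam Set.univ) :
    ∃ q, IsSemicoupling lam mu q := by
  by_cases h0 : lam Set.univ = 0
  · have hmu : mu = 0 := by
      rw [← Measure.measure_univ_eq_zero]
      exact le_antisymm (h0 ▸ hmass) zero_le
    exact ⟨0, by simp [Measure.zero_le], by simp [hmu]⟩
  · refine ⟨(lam Set.univ)⁻¹ • lam.prod mu, ?_, ?_⟩
    · rw [measure_fst_smul, Measure.fst, Measure.map_fst_prod, smul_smul]
      intro s
      simp only [Measure.smul_apply, smul_eq_mul]
      calc (lam Set.univ)⁻¹ * mu Set.univ * lam s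
          ≤ (lam Set.univ)⁻¹ * lam Set.univ * lam s := by gcongr
        _ = lam s := by rw [ENNReal.inv_mul_cancel h0 (measure_ne_top _ _), one_mul]
    · rw [measure_snd_smul, Measure.snd, Measure.map_snd_prod, smul_smul,
        ENNReal.inv_mul_cancel h0 (measure_ne_top _ _), one_smul]

/-! ### Existence of optimal semicouplings -/

/-- Portmanteau only controls open sets; outer regularity upgrades this to all sets. -/
lemma measure_le_of_forall_isOpen [TopologicalSpace M] [MeasurableSpace M]
    {μ ν : Measure M} [ν.OuterRegular] (h : ∀ U, IsOpen U → μ U ≤ ν U) : μ ≤ ν := by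
  intro s
  rw [s.measure_eq_iInf_isOpen ν]
  refine le_iInf₂ fun U hsU => le_iInf fun hU => (measure_mono hsU).trans (h U hU)

lemma IsScaleFn.dist_nonneg [MetricSpace M] {ϑ : ℝ → ℝ} (hϑ : IsScaleFn ϑ) (p : M × M) :
    0 ≤ ϑ (dist p.1 p.2) := by
  rw [← hϑ.map_zero]
  exact hϑ.strictMono.monotoneOn (by simp) (by simp) _root_.dist_nonneg

lemma measurable_costFn [MetricSpace M] [MeasurableSpace M] [BorelSpace M]
    [SecondCountableTopology M] {ϑ : ℝ → ℝ} (hϑ : IsScaleFn ϑ) :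
    Measurable (costFn (M := M) ϑ) := by
  have := hϑ.continuous
  unfold costFn
  fun_prop

/-- For a target of mass one, semicouplings form a set of probability measures carried by a fixed
compact set. A minimizing sequence has a weakly convergent subsequence by Prokhorov's theorem, and
the portmanteau inequality on open sets passes both marginal constraints and the bound on the cost
to the limit. -/
lemma exists_optimal_semicoupling_of_prob [MetricSpace M] [MeasurableSpace M] [BorelSpace M]
    [SecondCountableTopology M] {ϑ : ℝ → ℝ} (hϑ : IsScaleFn ϑ)
    (lam mu : Measure M) [IsFiniteMeasure lam] [IsProbabilityMeasure mu]
    (hlam : HasCompactSupportMeas lam) (hmu : HasCompactSupportMeas mu)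
    (hmass : mu Set.univ ≤ lam Set.univ) :
    ∃ q, IsSemicoupling lam mu q ∧ ∀ q', IsSemicoupling lam mu q' → Cost ϑ q ≤ Cost ϑ q' := by
  obtain ⟨K, hK, hK0⟩ := hlam
  obtain ⟨L, hL, hL0⟩ := hmu
  have hprob : ∀ q, IsSemicoupling lam mu q → IsProbabilityMeasure q := fun q hq =>
    ⟨by rw [hq.measure_univ, MeasureTheory.measure_univ]⟩
  have hcarried : ∀ q, IsSemicoupling lam mu q → q (K ×ˢ L)ᶜ = 0 := by
    intro q hq
    have h1 : q (Prod.fst ⁻¹' Kᶜ) = 0 := by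
      rw [← Measure.fst_apply hK.measurableSet.compl]
      exact le_antisymm ((hq.1 _).trans hK0.le) zero_le
    have h2 : q (Prod.snd ⁻¹' Lᶜ) = 0 := by
      rw [← Measure.snd_apply hL.measurableSet.compl, hq.2, hL0]
    refine measure_mono_null ?_ (measure_union_null h1 h2)
    intro p hp
    simp only [Set.mem_compl_iff, Set.mem_prod, not_and_or] at hp
    exact hp
  have hne : (Cost ϑ '' {q | IsSemicoupling lam mu q}).Nonempty :=
    (exists_semicoupling lam mu hmass).elim fun q hq => ⟨_, q, hq, rfl⟩
  obtain ⟨u, -, hu, hmem⟩ := exists_seq_tendsto_sInf hne (OrderBot.bddBelow _)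
  choose q hq hqu using hmem
  have hq' : ∀ n, IsSemicoupling lam mu (q n) := hq
  let P : ℕ → ProbabilityMeasure (M × M) := fun n => ⟨q n, hprob _ (hq' n)⟩
  have hcpt : IsCompact {p : ProbabilityMeasure (M × M) | ∀ _ : ℕ, p (K ×ˢ L)ᶜ ≤ 0} :=
    isCompact_setOfPred_probabilityMeasure_mass_eq_compl_isCompact_le
      (u := fun _ => 0) (K := fun _ => K ×ˢ L) tendsto_const_nhds (fun _ => hK.prod hL)
      (Or.inl inferInstance)
  obtain ⟨p, -, φ, hφ, hp⟩ := hcpt.isSeqCompact (x := P) (fun n _ => by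
    rw [← ENNReal.coe_le_coe, ProbabilityMeasure.ennreal_coeFn_eq_coeFn_toMeasure]
    exact (hcarried _ (hq' n)).le)
  have hopen : ∀ G, IsOpen G →
      (p : Measure (M × M)) G ≤ atTop.liminf fun n => q (φ n) G := fun G hG =>
    ProbabilityMeasure.le_liminf_measure_open_of_tendsto hp hG
  have hlim : ∀ (G : Set (M × M)) (c : ℝ≥0∞), IsOpen G → (∀ n, q n G ≤ c) →
      (p : Measure (M × M)) G ≤ c := by
    intro G c hG hc
    refine (hopen G hG).trans ?_
    refine (Filter.liminf_le_liminf (Eventually.of_forall fun n => hc (φ n))).trans ?_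
    simp
  refine ⟨p, ⟨?_, ?_⟩, fun q' hq' => ?_⟩
  · refine measure_le_of_forall_isOpen fun U hU => ?_
    rw [Measure.fst_apply hU.measurableSet]
    refine hlim _ _ (hU.preimage continuous_fst) fun n => ?_
    rw [← Measure.fst_apply hU.measurableSet]
    exact (hq' n).1 _
  · refine Measure.eq_of_le_of_measure_univ_eq (measure_le_of_forall_isOpen fun U hU => ?_) (by simp)
    rw [Measure.snd_apply hU.measurableSet]
    refine hlim _ _ (hU.preimage continuous_snd) fun n => ?_
    rw [← Measure.snd_apply hU.measurableSet, (hq' n).2]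
  · have hcont : Continuous fun x : M × M => ϑ (dist x.1 x.2) := by
      have := hϑ.continuous
      fun_prop
    have h1 : Cost ϑ (p : Measure (M × M)) ≤ atTop.liminf fun n => Cost ϑ (q (φ n)) :=
      lintegral_le_liminf_lintegral_of_forall_isOpen_measure_le_liminf_measure hcont
        hϑ.dist_nonneg hopen
    have h2 : Tendsto (fun n => Cost ϑ (q (φ n))) atTop
        (𝓝 (sInf (Cost ϑ '' {q | IsSemicoupling lam mu q}))) := by
      simp only [hqu]
      exact hu.comp hφ.tendsto_atTop
    rw [h2.liminf_eq] at h1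
    exact h1.trans (sInf_le ⟨q', hq', rfl⟩)

lemma exists_optimal_semicoupling [MetricSpace M] [MeasurableSpace M] [BorelSpace M]
    [SecondCountableTopology M] {ϑ : ℝ → ℝ} (hϑ : IsScaleFn ϑ)
    (lam mu : Measure M) [IsFiniteMeasure lam] [IsFiniteMeasure mu]
    (hlam : HasCompactSupportMeas lam) (hmu : HasCompactSupportMeas mu)
    (hmass : mu Set.univ ≤ lam Set.univ) :
    ∃ q, IsSemicoupling lam mu q ∧ ∀ q', IsSemicoupling lam mu q' → Cost ϑ q ≤ Cost ϑ q' := by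
  by_cases h0 : mu Set.univ = 0
  · have hmu0 : mu = 0 := Measure.measure_univ_eq_zero.1 h0
    exact ⟨0, ⟨by simp [Measure.zero_le], by simp [hmu0]⟩, fun q' _ => by simp [Cost]⟩
  · have htop : mu Set.univ ≠ ∞ := measure_ne_top _ _
    set a := mu Set.univ with ha
    have hinv : a * a⁻¹ = 1 := ENNReal.mul_inv_cancel h0 htop
    have hfin : IsFiniteMeasure (a⁻¹ • lam) :=
      Measure.smul_finite _ (ENNReal.inv_ne_top.2 h0)
    have hpr : IsProbabilityMeasure (a⁻¹ • mu) :=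
      ⟨by rw [Measure.smul_apply, smul_eq_mul, ← ha, mul_comm, hinv]⟩
    obtain ⟨q, hq, hopt⟩ := exists_optimal_semicoupling_of_prob hϑ (a⁻¹ • lam) (a⁻¹ • mu)
      (hlam.of_absolutelyContinuous Measure.smul_absolutelyContinuous)
      (hmu.of_absolutelyContinuous Measure.smul_absolutelyContinuous)
      (by simp only [Measure.smul_apply, smul_eq_mul]; gcongr)
    refine ⟨a • q, ?_, fun q' hq' => ?_⟩
    · simpa [smul_smul, hinv] using hq.smul a
    · calc Cost ϑ (a • q) = a * Cost ϑ q := cost_smul _ _ _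
        _ ≤ a * Cost ϑ (a⁻¹ • q') := by gcongr; exact hopt _ (hq'.smul _)
        _ = Cost ϑ q' := by rw [cost_smul, ← mul_assoc, hinv, one_mul]

/-! ### Completion of an optimal semicoupling to an optimal coupling -/

/-- A coupling of `lam` with a sum `mu + ka` contains a semicoupling of `lam` and `mu`: weight
the coupling by the density of `mu` with respect to `mu + ka` in the second variable. -/
lemma IsCoupling.exists_semicoupling_le [MeasurableSpace M] {lam mu ka : Measure M}
    [IsFiniteMeasure mu] [IsFiniteMeasure ka] {g : Measure (M × M)}
    (hg : IsCoupling lam (mu + ka) g) : ∃ q ≤ g, IsSemicoupling lam mu q := by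
  have hle : mu ≤ mu + ka := Measure.le_add_right le_rfl
  set h := mu.rnDeriv (mu + ka) with hh
  have hm : Measurable h := Measure.measurable_rnDeriv _ _
  have hle1 : ∀ᵐ p ∂g, h p.2 ≤ 1 := by
    have h1 : ∀ᵐ y ∂g.snd, h y ≤ 1 := by
      rw [hg.2]; exact Measure.rnDeriv_le_one_of_le hle
    exact ae_of_ae_map measurable_snd.aemeasurable h1
  have hqg : g.withDensity (fun p => h p.2) ≤ g := by
    calc g.withDensity (fun p => h p.2) ≤ g.withDensity 1 := withDensity_mono hle1
      _ = g := withDensity_one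
  refine ⟨g.withDensity (fun p => h p.2), hqg, hg.1 ▸ Measure.fst_mono hqg, ?_⟩
  have hmu : (mu + ka).withDensity h = mu :=
    Measure.withDensity_rnDeriv_eq _ _ hle.absolutelyContinuous
  ext s hs
  rw [Measure.snd_apply hs, withDensity_apply _ (measurable_snd hs), ← hmu,
    withDensity_apply _ hs, ← hg.2, Measure.snd, setLIntegral_map hs hm measurable_snd]

/-- Keeping the unused mass `ka` of `lam` at rest costs nothing, so an optimal semicoupling `q`
of `lam` and `mu` becomes an optimal coupling of `lam` and `mu + ka`. The Monge assumption then
gives a map whose graph carries `q` and which fixes `ka`-almost every point. -/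
lemma exists_map_of_optimal [MetricSpace M] [MeasurableSpace M] [BorelSpace M]
    [SecondCountableTopology M] {m : Measure M} {ϑ : ℝ → ℝ} (hϑ : IsScaleFn ϑ)
    (hMonge : MongeUnique m ϑ) {lam mu ka : Measure M} [IsFiniteMeasure lam] [IsFiniteMeasure mu]
    (hlam : HasCompactSupportMeas lam) (hmu : HasCompactSupportMeas mu) (hac : lam ≪ m)
    (hlam0 : lam Set.univ ≠ 0) {q : Measure (M × M)} (hq : IsSemicoupling lam mu q)
    (hopt : ∀ q', IsSemicoupling lam mu q' → Cost ϑ q ≤ Cost ϑ q') (hka : q.fst + ka = lam) :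
    ∃ S : M → M, Measurable S ∧ (∀ᵐ p ∂q, p.2 = S p.1) ∧ ∀ᵐ x ∂ka, S x = x := by
  have hkale : ka ≤ lam := hka ▸ Measure.le_add_left le_rfl
  have hkafin : IsFiniteMeasure ka := isFiniteMeasure_of_le lam hkale
  have hdiag : Measurable fun x : M => (x, x) := by fun_prop
  set Q : Measure (M × M) := q + ka.map fun x => (x, x) with hQ
  have hfst : Q.fst = lam := by
    rw [hQ, Measure.fst_add, Measure.fst_map_prodMk measurable_id', Measure.map_id', hka]
  have hsnd : Q.snd = mu + ka := by
    rw [hQ, Measure.snd_add, Measure.snd_map_prodMk measurable_id', Measure.map_id', hq.2]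
  have hcost : Cost ϑ Q = Cost ϑ q := by
    rw [hQ, cost_add]
    have : Cost ϑ (ka.map fun x => (x, x)) = 0 := by
      rw [Cost, lintegral_map (measurable_costFn hϑ) hdiag]
      simp [costFn, hϑ.map_zero]
    rw [this, add_zero]
  set a := lam Set.univ with ha
  have htop : a ≠ ∞ := measure_ne_top _ _
  have hinv : a * a⁻¹ = 1 := ENNReal.mul_inv_cancel hlam0 htop
  have huniv : (mu + ka) Set.univ = a := by
    rw [← hsnd, Measure.snd_univ, ← Measure.fst_univ, hfst]
  have hcoup : IsCoupling (a⁻¹ • lam) (a⁻¹ • (mu + ka)) (a⁻¹ • Q) :=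
    IsCoupling.smul ⟨hfst, hsnd⟩ _
  obtain ⟨S, hS, hSeq⟩ := (hMonge (a⁻¹ • lam) (a⁻¹ • (mu + ka))
    ⟨by rw [Measure.smul_apply, smul_eq_mul, ← ha, mul_comm, hinv]⟩
    ⟨by rw [Measure.smul_apply, smul_eq_mul, huniv, mul_comm, hinv]⟩
    (hlam.of_absolutelyContinuous Measure.smul_absolutelyContinuous)
    ((hmu.add (hlam.of_absolutelyContinuous hkale.absolutelyContinuous)).of_absolutelyContinuous
      Measure.smul_absolutelyContinuous)
    (Measure.smul_absolutelyContinuous.trans hac)).2 (a⁻¹ • Q) ⟨hcoup, fun g hg => by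
      have hg' : IsCoupling lam (mu + ka) (a • g) := by
        simpa only [smul_smul, hinv, one_smul] using hg.smul a
      obtain ⟨q', hle, hq'⟩ := hg'.exists_semicoupling_le
      calc Cost ϑ (a⁻¹ • Q) = a⁻¹ * Cost ϑ q := by rw [cost_smul, hcost]
        _ ≤ a⁻¹ * Cost ϑ (a • g) := by
          gcongr
          exact (hopt q' hq').trans (lintegral_mono' hle le_rfl)
        _ = Cost ϑ g := by rw [cost_smul, ← mul_assoc, mul_comm a⁻¹, hinv, one_mul]⟩
  have hQS : ∀ᵐ p ∂Q, p.2 = S p.1 := by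
    have hgraph : MeasurableSet {p : M × M | p.2 = S p.1} :=
      measurableSet_eq_fun measurable_snd (hS.comp measurable_fst)
    have h1 : ∀ᵐ p ∂(a⁻¹ • Q), p.2 = S p.1 := by
      rw [hSeq, ae_map_iff (by fun_prop) hgraph]
      simp
    exact (Measure.absolutelyContinuous_smul (ENNReal.inv_ne_zero.2 htop)).ae_le h1
  rw [hQ, ae_add_measure_iff] at hQS
  exact ⟨S, hS, hQS.1, (ae_of_ae_map hdiag.aemeasurable hQS.2).mono fun x hx => hx.symm⟩

lemma eq_map_of_ae_graph [MeasurableSpace M] {q : Measure (M × M)} {S : M → M}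
    (hS : Measurable S) (h : ∀ᵐ p ∂q, p.2 = S p.1) : q = q.fst.map fun x => (x, S x) := by
  rw [Measure.fst, Measure.map_map (by fun_prop) measurable_fst]
  calc q = q.map id := Measure.map_id.symm
    _ = _ := Measure.map_congr (h.mono fun p hp => by simp [Prod.ext_iff, hp])

/-! ### Uniqueness -/

/-- Both optimal semicouplings are dominated by twice their midpoint, so they live on the graph
of one map `S`, which also fixes almost every point of either unused mass `ka₁`, `ka₂`. Hence
the image of `lam` under `S` is both `mu + ka₁` and `mu + ka₂`. -/
lemma optimal_semicoupling_unique [MetricSpace M] [MeasurableSpace M] [BorelSpace M]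
    [SecondCountableTopology M] {m : Measure M} {ϑ : ℝ → ℝ} (hϑ : IsScaleFn ϑ)
    (hMonge : MongeUnique m ϑ) {lam mu : Measure M} [IsFiniteMeasure lam] [IsFiniteMeasure mu]
    (hlam : HasCompactSupportMeas lam) (hmu : HasCompactSupportMeas mu) (hac : lam ≪ m)
    (hlam0 : lam Set.univ ≠ 0) {q₁ q₂ : Measure (M × M)}
    (hq₁ : IsSemicoupling lam mu q₁) (hq₂ : IsSemicoupling lam mu q₂)
    (hopt₁ : ∀ q', IsSemicoupling lam mu q' → Cost ϑ q₁ ≤ Cost ϑ q')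
    (hopt₂ : ∀ q', IsSemicoupling lam mu q' → Cost ϑ q₂ ≤ Cost ϑ q') : q₁ = q₂ := by
  have hfin₁ := hq₁.isFiniteMeasure
  have hfin₂ := hq₂.isFiniteMeasure
  have hka₁ : q₁.fst + (lam - q₁.fst) = lam := by
    rw [add_comm]; exact Measure.sub_add_cancel_of_le hq₁.1
  have hka₂ : q₂.fst + (lam - q₂.fst) = lam := by
    rw [add_comm]; exact Measure.sub_add_cancel_of_le hq₂.1
  set ka₁ := lam - q₁.fst
  set ka₂ := lam - q₂.fst
  have hhalf : ∀ μ : Measure M, (2⁻¹ : ℝ≥0∞) • (μ + μ) = μ := fun μ => by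
    rw [smul_add, ← add_smul, ENNReal.inv_two_add_inv_two, one_smul]
  have hmid : (((2⁻¹ : ℝ≥0∞) • (q₁ + q₂)).fst) + (2⁻¹ : ℝ≥0∞) • (ka₁ + ka₂) = lam := by
    rw [measure_fst_smul, Measure.fst_add, ← smul_add, add_add_add_comm, hka₁, hka₂, hhalf]
  have hq : IsSemicoupling lam mu ((2⁻¹ : ℝ≥0∞) • (q₁ + q₂)) := by
    refine ⟨?_, ?_⟩
    · conv_rhs => rw [← hmid]
      exact Measure.le_add_right le_rfl
    · rw [measure_snd_smul, Measure.snd_add, hq₁.2, hq₂.2, hhalf]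
  have hopt : ∀ q', IsSemicoupling lam mu q' →
      Cost ϑ ((2⁻¹ : ℝ≥0∞) • (q₁ + q₂)) ≤ Cost ϑ q' := fun q' hq' => by
    rw [cost_smul, cost_add]
    calc 2⁻¹ * (Cost ϑ q₁ + Cost ϑ q₂) ≤ 2⁻¹ * (Cost ϑ q' + Cost ϑ q') := by
          gcongr
          exacts [hopt₁ q' hq', hopt₂ q' hq']
      _ = Cost ϑ q' := by
        rw [mul_add, ← add_mul, ENNReal.inv_two_add_inv_two, one_mul]
  obtain ⟨S, hS, hgraph, hfix⟩ :=
    exists_map_of_optimal hϑ hMonge hlam hmu hac hlam0 hq hopt hmid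
  have h2 : (2⁻¹ : ℝ≥0∞) ≠ 0 := by simp
  have hgraph' := (Measure.absolutelyContinuous_smul (μ := q₁ + q₂) h2).ae_le hgraph
  have hfix' := (Measure.absolutelyContinuous_smul (μ := ka₁ + ka₂) h2).ae_le hfix
  replace hfix' := ae_add_measure_iff.1 hfix'
  have hgr := ae_add_measure_iff.1 hgraph'
  have key : ∀ (q : Measure (M × M)) (ka : Measure M), (∀ᵐ p ∂q, p.2 = S p.1) →
      (∀ᵐ x ∂ka, S x = x) → q.snd = mu → q.fst + ka = lam → lam.map S = mu + ka := by
    intro q ka h1 h2 h3 h4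
    -- `S` sends `q.fst` to `q.snd = mu` and leaves `ka` in place
    rw [← h4, Measure.map_add _ _ hS]
    congr 1
    · rw [← h3, Measure.fst, Measure.map_map hS measurable_fst, Measure.snd]
      exact Measure.map_congr (h1.mono fun p hp => hp.symm)
    · calc ka.map S = ka.map id := Measure.map_congr h2
        _ = ka := Measure.map_id
  have e : ka₁ + mu = ka₂ + mu := by
    rw [add_comm, add_comm ka₂, ← key q₁ ka₁ hgr.1 hfix'.1 hq₁.2 hka₁,
      ← key q₂ ka₂ hgr.2 hfix'.2 hq₂.2 hka₂]
  have hka : ka₁ = ka₂ := by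
    rw [← Measure.add_sub_cancel (μ := ka₁) (ν := mu), e, Measure.add_sub_cancel]
  have hka₂fin : IsFiniteMeasure ka₂ :=
    isFiniteMeasure_of_le lam (by conv_rhs => rw [← hka₂]
                                  exact Measure.le_add_left le_rfl)
  have hfsteq : q₁.fst = q₂.fst := by
    rw [← Measure.add_sub_cancel (μ := q₁.fst) (ν := ka₂), ← hka, hka₁, hka, ← hka₂,
      Measure.add_sub_cancel]
  rw [eq_map_of_ae_graph hS hgr.1, eq_map_of_ae_graph hS hgr.2, hfsteq]

/-! ### Densities bounded by one, and the conclusion -/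

/-- A measure dominated by `lam` has a density which is everywhere, not just almost everywhere,
at most one. -/
lemma exists_density_le_one [MeasurableSpace M] {lam nu : Measure M} [IsFiniteMeasure lam]
    (h : nu ≤ lam) :
    ∃ ρ : M → ℝ≥0∞, Measurable ρ ∧ (∀ x, ρ x ≤ 1) ∧ lam.withDensity ρ = nu := by
  have : IsFiniteMeasure nu := isFiniteMeasure_of_le lam h
  refine ⟨fun x => min (nu.rnDeriv lam x) 1, by fun_prop, fun x => min_le_right _ _, ?_⟩
  conv_rhs => rw [← Measure.withDensity_rnDeriv_eq nu lam h.absolutelyContinuous]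
  refine withDensity_congr_ae ((Measure.rnDeriv_le_one_of_le h).mono fun x hx => ?_)
  exact min_eq_left hx

end SemicouplingHelpers

theorem exists_unique_optimal_semicoupling_bounded
    {M : Type*} [MetricSpace M] [MeasurableSpace M] [BorelSpace M]
    [ProperSpace M] [SecondCountableTopology M]
    (m : Measure M) [IsLocallyFiniteMeasure m]
    (ϑ : ℝ → ℝ) (hϑ : IsScaleFn ϑ) (hMonge : MongeUnique m ϑ)
    -- `lam = f ⬝ m` for a compactly supported integrable density `f`
    (f : M → ℝ≥0∞) (hf : Measurable f) (hfint : ∫⁻ x, f x ∂m ≠ ⊤)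
    (hfsupp : ∃ K : Set M, IsCompact K ∧ ∀ x ∉ K, f x = 0)
    (lam : Measure M) (hlam : lam = m.withDensity f)
    -- `mu` is a finite, compactly supported measure with `mu M ≤ lam M`
    (mu : Measure M) [IsFiniteMeasure mu] (hmusupp : HasCompactSupportMeas mu)
    (hmass : mu Set.univ ≤ lam Set.univ) :
    ∃ q : Measure (M × M),
      (IsSemicoupling lam mu q ∧
        ∀ q' : Measure (M × M), IsSemicoupling lam mu q' → Cost ϑ q ≤ Cost ϑ q') ∧
      (∀ q' : Measure (M × M),
        (IsSemicoupling lam mu q' ∧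
          ∀ q'' : Measure (M × M), IsSemicoupling lam mu q'' → Cost ϑ q' ≤ Cost ϑ q'') →
        q' = q) ∧
      ∃ (T : M → Option M) (ρ : M → ℝ≥0∞), Measurable T ∧ Measurable ρ ∧ (∀ x, ρ x ≤ 1) ∧
        Measure.map (fun p : M × M => (p.1, some p.2)) q =
          Measure.map (fun x => (x, T x)) (lam.withDensity ρ) := by
  have hfin : IsFiniteMeasure lam := by
    rw [hlam]; exact isFiniteMeasure_withDensity hfint
  have hac : lam ≪ m := hlam ▸ withDensity_absolutelyContinuous m f
  have hsupp : HasCompactSupportMeas lam := by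
    obtain ⟨K, hK, hK0⟩ := hfsupp
    refine ⟨K, hK, ?_⟩
    rw [hlam, withDensity_apply _ hK.measurableSet.compl,
      setLIntegral_eq_zero hK.measurableSet.compl fun x hx => hK0 x hx]
  have hsome : Measurable (some : M → Option M) := fun s hs => hs
  -- The Monge assumption concerns probability measures, so `lam = 0` cannot be normalised.
  by_cases h0 : lam Set.univ = 0
  · have hl : lam = 0 := Measure.measure_univ_eq_zero.1 h0
    have hm0 : mu Set.univ = 0 := le_antisymm (h0 ▸ hmass) zero_le
    have hmu0 : mu = 0 := Measure.measure_univ_eq_zero.1 hm0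
    refine ⟨0, ⟨⟨by simp [Measure.zero_le], by simp [hmu0]⟩, fun q' _ => by simp [Cost]⟩, ?_,
      fun _ => none, 0, measurable_const, measurable_const, fun x => by simp, by simp⟩
    rintro q' ⟨hq', -⟩
    rw [← Measure.measure_univ_eq_zero, hq'.measure_univ, hm0]
  · obtain ⟨q, hq, hopt⟩ := exists_optimal_semicoupling hϑ lam mu hsupp hmusupp hmass
    refine ⟨q, ⟨hq, hopt⟩, fun q' hq' => optimal_semicoupling_unique hϑ hMonge hsupp hmusupp hac
      h0 hq'.1 hq hq'.2 hopt, ?_⟩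
    have hqfin := hq.isFiniteMeasure
    obtain ⟨S, hS, hgraph, -⟩ := exists_map_of_optimal hϑ hMonge hsupp hmusupp hac h0 hq hopt
      (ka := lam - q.fst) (by rw [add_comm]; exact Measure.sub_add_cancel_of_le hq.1)
    obtain ⟨ρ, hρ, hρ1, hρeq⟩ := exists_density_le_one hq.1
    refine ⟨fun x => some (S x), ρ, hsome.comp hS, hρ, hρ1, ?_⟩
    conv_lhs => rw [eq_map_of_ae_graph hS hgraph]
    rw [hρeq, Measure.map_map (by fun_prop) (by fun_prop)]
    rfl
end

section
/- Fix p in [1,infinity) and for equivariant random measures of unit intensity define W_p(lambda^bullet, mu^bullet)^p := inf over equivariant couplings q^bullet of lambda^bullet and mu^bullet of E[ integral over M x B0 of d(x,y)^p dq^bullet ]. Let mu^bullet, lambda^bullet, xi^bullet be three equivariant random measures of unit intensity (with the relevant quantities finite). Then: (i) W_p(lambda^bullet, mu^bullet) = 0 if and only if lambda^omega = mu^omega for P-a.e. omega; (ii) W_p(lambda^bullet, mu^bullet) = W_p(mu^bullet, lambda^bullet); (iii) W_p(lambda^bullet, mu^bullet) <= W_p(lambda^bullet, xi^bullet) + W_p(xi^bullet,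 mu^bullet). -/
/-!
The three assertions rest on two devices. For an invariant cost and an equivariant coupling, the
expected cost of the mass leaving the fundamental domain `B0` equals that of the mass entering it
(`mass_transport`); this gives symmetry by swapping coordinates. Summing all translates of a random
measure along the flow (`periodize`) yields an equivariant random measure whose expected cost into
`B0` is the full expected cost of the original one (`cost_periodize`).

If `𝕎_p(λ, μ) = 0`, no optimal coupling is needed: along equivariant couplings with summable costs,
the cost of transport into each translate of `B0` tends to `0` almost surely, which forces
`μ(K) ≤ λ(K^δ)` for all compact `K` and `δ > 0`, hence `μ ≤ λ` (`ae_le_of_small_cost`). Equality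
follows by symmetry. Conversely the diagonal coupling has cost zero.

For the triangle inequality, take arbitrary equivariant couplings `q₁` of `λ, ξ` and `q₂` of `ξ, μ`.
The parts of both whose `ξ`-coordinate lies in `B0` are almost surely finite with a common marginal
`ξ|_{B0}`, so they can be glued measurably in `ω` by disintegrating finite kernels
(`exists_random_glue`). Periodizing the outer marginal of the gluing gives an equivariant coupling
of `λ` and `μ`, and Minkowski's inequality for the averaged gluing bounds its cost
(`exists_glued_coupling`). Taking infima over `q₁` and `q₂` concludes.
-/

open MeasureTheory ENNReal Filter Topology
open scoped Pointwise ENNReal symmDiff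

section GroupSetup

variable {M : Type*} [MetricSpace M] [MeasurableSpace M]
variable {Ω : Type*} [MeasurableSpace Ω]

/-- A (strict) fundamental domain for the action of `G` on `M`: a Borel set whose translates
are pairwise disjoint and cover `M`. -/
def IsFundDom (G : Type*) [Group G] [MulAction G M] (F : Set M) : Prop :=
  MeasurableSet F ∧ ∀ x : M, ∃! g : G, x ∈ g • F

/-- Admissible sets: finite nonempty unions of translates of a fundamental domain. -/
def Adm (G : Type*) [Group G] [MulAction G M] (B : Set M) : Prop :=
  ∃ (F : Set M) (I : Set G), IsFundDom G F ∧ I.Finite ∧ I.Nonempty ∧ B = ⋃ g ∈ I, g • F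

/-- The action of `G` on `M` is properly discontinuous. -/
def ProperlyDiscontinuousAct (G : Type*) [Group G] [MulAction G M] : Prop :=
  ∀ (x : M) (K : Set M), IsCompact K → {g : G | g • x ∈ K}.Finite

/-- The action of `G` on `M` is cocompact. -/
def CocompactAct (G : Type*) [Group G] [MulAction G M] : Prop :=
  ∃ K : Set M, IsCompact K ∧ ⋃ g : G, g • K = Set.univ

/-- The action of `G` on `M` is free. -/
def FreeAct (G : Type*) [Group G] [MulAction G M] : Prop :=
  ∀ (g : G) (x : M), g • x = x → g = 1

/-- `θ` is a measurable flow on `Ω` indexed by `G`. -/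
structure IsFlow {G : Type*} [Group G] (θ : G → Ω → Ω) : Prop where
  measurable : ∀ g : G, Measurable (θ g)
  map_one : θ 1 = id
  map_mul : ∀ g h : G, θ g ∘ θ h = θ (g * h)

/-- `P` is stationary under the flow `θ`. -/
def Stationary {G : Type*} [Group G] (θ : G → Ω → Ω) (P : Measure Ω) : Prop :=
  ∀ g : G, P.map (θ g) = P

/-- An equivariant random measure: `λ^{θ_g ω}(gA) = λ^ω(A)`, i.e.
`λ^{θ_g ω} = (g•)_* λ^ω`. -/
def EquivRandMeasure {G : Type*} [Group G] [MulAction G M] (θ : G → Ω → Ω)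
    (lam : Ω → Measure M) : Prop :=
  ∀ (g : G) (ω : Ω), lam (θ g ω) = Measure.map (fun x => g • x) (lam ω)

/-- An equivariant random measure on `M × M` (under the diagonal action). -/
def EquivRandCoupling {G : Type*} [Group G] [MulAction G M] (θ : G → Ω → Ω)
    (q : Ω → Measure (M × M)) : Prop :=
  ∀ (g : G) (ω : Ω), q (θ g ω) = Measure.map (fun p : M × M => (g • p.1, g • p.2)) (q ω)

/-- The random measure `lam` has intensity `β` (w.r.t. the reference measure `m`). -/
def HasIntensity (m : Measure M) (P : Measure Ω) (lam : Ω → Measure M) (β : ℝ≥0∞) : Prop :=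
  ∀ A : Set M, MeasurableSet A → ∫⁻ ω, lam ω A ∂P = β * m A

/-- The random measure `lam` is absolutely continuous w.r.t. `m`, a.s. -/
def AbsContRand (m : Measure M) (P : Measure Ω) (lam : Ω → Measure M) : Prop :=
  ∀ᵐ ω ∂P, lam ω ≪ m

/-- A semicoupling of the random measures `lam` and `mu`. -/
def IsRandSemicoupling (P : Measure Ω) (lam mu : Ω → Measure M)
    (q : Ω → Measure (M × M)) : Prop :=
  Measurable q ∧ ∀ᵐ ω ∂P, IsSemicoupling (lam ω) (mu ω) (q ω)

/-- A coupling of the random measures `lam` and `mu`. -/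
def IsRandCoupling (P : Measure Ω) (lam mu : Ω → Measure M)
    (q : Ω → Measure (M × M)) : Prop :=
  Measurable q ∧ ∀ᵐ ω ∂P, IsCoupling (lam ω) (mu ω) (q ω)

/-- The mean transportation cost of a (semi)coupling: supremum over admissible sets `B` of the
normalized expected cost of the transport into `B`. -/
noncomputable def meanCost (G : Type*) [Group G] [MulAction G M] (m : Measure M)
    (P : Measure Ω) (ϑ : ℝ → ℝ) (q : Ω → Measure (M × M)) : ℝ≥0∞ :=
  ⨆ B ∈ {B : Set M | Adm G B},
    (m B)⁻¹ * ∫⁻ ω, ∫⁻ p in Set.univ ×ˢ B, costFn ϑ p ∂(q ω) ∂P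

/-- The optimal mean transportation cost over equivariant semicouplings. -/
noncomputable def ceInftySemi (G : Type*) [Group G] [MulAction G M] (m : Measure M)
    (P : Measure Ω) (ϑ : ℝ → ℝ) (θ : G → Ω → Ω) (lam mu : Ω → Measure M) : ℝ≥0∞ :=
  ⨅ q ∈ {q : Ω → Measure (M × M) |
      IsRandSemicoupling P lam mu q ∧ EquivRandCoupling θ q},
    meanCost G m P ϑ q

/-- The optimal mean transportation cost over equivariant couplings. -/
noncomputable def ceInftyCoup (G : Type*) [Group G] [MulAction G M] (m : Measure M)
    (P : Measure Ω) (ϑ : ℝ → ℝ) (θ : G → Ω → Ω) (lam mu : Ω → Measure M) : ℝ≥0∞ :=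
  ⨅ q ∈ {q : Ω → Measure (M × M) |
      IsRandCoupling P lam mu q ∧ EquivRandCoupling θ q},
    meanCost G m P ϑ q

/-- An optimal semicoupling: equivariant and attaining the optimal mean transportation cost. -/
def IsOptSemicoupling (G : Type*) [Group G] [MulAction G M] (m : Measure M)
    (P : Measure Ω) (ϑ : ℝ → ℝ) (θ : G → Ω → Ω) (lam mu : Ω → Measure M)
    (q : Ω → Measure (M × M)) : Prop :=
  IsRandSemicoupling P lam mu q ∧ EquivRandCoupling θ q ∧
    meanCost G m P ϑ q = ceInftySemi G m P ϑ θ lam mu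

/-- An optimal coupling: equivariant and attaining the optimal mean transportation cost. -/
def IsOptCoupling (G : Type*) [Group G] [MulAction G M] (m : Measure M)
    (P : Measure Ω) (ϑ : ℝ → ℝ) (θ : G → Ω → Ω) (lam mu : Ω → Measure M)
    (q : Ω → Measure (M × M)) : Prop :=
  IsRandCoupling P lam mu q ∧ EquivRandCoupling θ q ∧
    meanCost G m P ϑ q = ceInftyCoup G m P ϑ θ lam mu

end GroupSetup

/-- The `L^p`-optimal mean transportation cost between two equivariant random measures:
`𝕎_p(λ^•,μ^•)^p = inf { E ∫_{M × B₀} d(x,y)^p dq : q equivariant coupling }`. -/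
noncomputable def Wp {M : Type*} [MetricSpace M] [MeasurableSpace M]
    {Ω : Type*} [MeasurableSpace Ω] {G : Type*} [Group G] [MulAction G M]
    (P : Measure Ω) (θ : G → Ω → Ω) (B0 : Set M) (p : ℝ)
    (lam mu : Ω → Measure M) : ℝ≥0∞ :=
  (⨅ q ∈ {q : Ω → Measure (M × M) | IsRandCoupling P lam mu q ∧ EquivRandCoupling θ q},
      ∫⁻ ω, ∫⁻ z in Set.univ ×ˢ B0, edist z.1 z.2 ^ p ∂(q ω) ∂P) ^ (1 / p)

/-! ### Measurable gluing of random measures -/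

open ProbabilityTheory in
/-- Gluing for finite kernels: two kernels with values in `Y × X` and `Y × Z` are the
corresponding marginals of the kernel with values in `Y × (X × Z)` under which the last two
coordinates are conditionally independent given the first. -/
lemma exists_kernel_glue {Ω Y X Z : Type*} [MeasurableSpace Ω] [MeasurableSpace Y]
    [StandardBorelSpace Y] [MeasurableSpace X] [StandardBorelSpace X] [Nonempty X]
    [MeasurableSpace Z] [StandardBorelSpace Z] [Nonempty Z]
    (K₁ : Kernel Ω (Y × X)) (K₂ : Kernel Ω (Y × Z)) [IsFiniteKernel K₁] [IsFiniteKernel K₂] :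
    ∃ Q : Kernel Ω (Y × (X × Z)), ∀ ω, (K₁ ω).fst = (K₂ ω).fst →
      (Q ω).map (fun t => (t.1, t.2.1)) = K₁ ω ∧ (Q ω).map (fun t => (t.1, t.2.2)) = K₂ ω := by
  refine ⟨K₁.fst ⊗ₖ (K₁.condKernel ×ₖ K₂.condKernel), fun ω h => ⟨?_, ?_⟩⟩
  · refine Measure.ext_of_lintegral _ fun f hf => ?_
    have e : ∫⁻ a, f a ∂(K₁ ω) = ∫⁻ a, f a ∂((K₁.fst ⊗ₖ K₁.condKernel) ω) := by
      rw [K₁.disintegrate]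
    rw [lintegral_map hf (by fun_prop), Kernel.lintegral_compProd _ _ _ (by fun_prop), e,
      Kernel.lintegral_compProd _ _ _ hf]
    refine lintegral_congr fun y => ?_
    rw [Kernel.lintegral_prod _ _ _ (by fun_prop)]
    simp
  · refine Measure.ext_of_lintegral _ fun f hf => ?_
    have e : ∫⁻ a, f a ∂(K₂ ω) = ∫⁻ a, f a ∂((K₂.fst ⊗ₖ K₂.condKernel) ω) := by
      rw [K₂.disintegrate]
    have h' : K₁.fst ω = K₂.fst ω := by rw [Kernel.fst_apply, Kernel.fst_apply]; exact h
    rw [lintegral_map hf (by fun_prop), Kernel.lintegral_compProd _ _ _ (by fun_prop), e,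
      Kernel.lintegral_compProd _ _ _ hf, h']
    refine lintegral_congr fun y => ?_
    rw [Kernel.lintegral_prod _ _ _ (by fun_prop)]
    simp

lemma measurable_smul_measure {Ω Y : Type*} [MeasurableSpace Ω] [MeasurableSpace Y]
    {c : Ω → ℝ≥0∞} {κ : Ω → Measure Y} (hc : Measurable c) (hκ : Measurable κ) :
    Measurable fun ω => c ω • κ ω := by
  refine Measure.measurable_of_measurable_coe _ fun s hs => ?_
  simp only [Measure.smul_apply, smul_eq_mul]
  exact hc.mul ((Measure.measurable_coe hs).comp hκ)

open ProbabilityTheory in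
/-- Gluing for random measures which are only almost surely finite with a common marginal.
Dividing by `1 + κ₁ ω univ` makes the masses uniformly bounded, so that the theory of finite
kernels applies; the factor is put back afterwards. -/
lemma exists_random_glue {Ω Y X Z : Type*} [MeasurableSpace Ω] [MeasurableSpace Y]
    [StandardBorelSpace Y] [MeasurableSpace X] [StandardBorelSpace X] [Nonempty X]
    [MeasurableSpace Z] [StandardBorelSpace Z] [Nonempty Z] (P : Measure Ω)
    {κ₁ : Ω → Measure (Y × X)} {κ₂ : Ω → Measure (Y × Z)}
    (h₁ : Measurable κ₁) (h₂ : Measurable κ₂)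
    (h : ∀ᵐ ω ∂P, (κ₁ ω).fst = (κ₂ ω).fst) (hfin : ∀ᵐ ω ∂P, κ₁ ω Set.univ ≠ ∞) :
    ∃ Q : Ω → Measure (Y × (X × Z)), Measurable Q ∧ ∀ᵐ ω ∂P,
      (Q ω).map (fun t => (t.1, t.2.1)) = κ₁ ω ∧ (Q ω).map (fun t => (t.1, t.2.2)) = κ₂ ω := by
  classical
  obtain ⟨S, hSP, hSm, hS⟩ := (h.and hfin).exists_measurable_mem
  set c : Ω → ℝ≥0∞ := fun ω => 1 + κ₁ ω Set.univ with hc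
  have hcm : Measurable c :=
    measurable_const.add ((Measure.measurable_coe MeasurableSet.univ).comp h₁)
  let K₁ : Kernel Ω (Y × X) := ⟨S.piecewise (fun ω => (c ω)⁻¹ • κ₁ ω) 0,
    (measurable_smul_measure hcm.inv h₁).piecewise hSm measurable_const⟩
  let K₂ : Kernel Ω (Y × Z) := ⟨S.piecewise (fun ω => (c ω)⁻¹ • κ₂ ω) 0,
    (measurable_smul_measure hcm.inv h₂).piecewise hSm measurable_const⟩
  have e₁ : ∀ ω ∈ S, K₁ ω = (c ω)⁻¹ • κ₁ ω := fun ω hω =>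
    Set.piecewise_eq_of_mem S (fun ω => (c ω)⁻¹ • κ₁ ω) 0 hω
  have e₂ : ∀ ω ∈ S, K₂ ω = (c ω)⁻¹ • κ₂ ω := fun ω hω =>
    Set.piecewise_eq_of_mem S (fun ω => (c ω)⁻¹ • κ₂ ω) 0 hω
  have n₁ : ∀ ω ∉ S, K₁ ω = 0 := fun ω hω =>
    Set.piecewise_eq_of_notMem S (fun ω => (c ω)⁻¹ • κ₁ ω) 0 hω
  have n₂ : ∀ ω ∉ S, K₂ ω = 0 := fun ω hω =>
    Set.piecewise_eq_of_notMem S (fun ω => (c ω)⁻¹ • κ₂ ω) 0 hω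
  have huniv : ∀ ω ∈ S, κ₂ ω Set.univ = κ₁ ω Set.univ := fun ω hω => by
    rw [← Measure.fst_univ, ← Measure.fst_univ, (hS ω hω).1]
  have hle : ∀ ω, (c ω)⁻¹ * κ₁ ω Set.univ ≤ 1 := fun ω => by
    rw [mul_comm, ← div_eq_mul_inv]
    exact ENNReal.div_le_of_le_mul (by simp [hc])
  have : IsFiniteKernel K₁ := ⟨1, ENNReal.one_lt_top, fun ω => by
    by_cases hω : ω ∈ S
    · simpa [e₁ ω hω] using hle ω
    · simp [n₁ ω hω]⟩
  have : IsFiniteKernel K₂ := ⟨1, ENNReal.one_lt_top, fun ω => by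
    by_cases hω : ω ∈ S
    · simpa [e₂ ω hω, huniv ω hω] using hle ω
    · simp [n₂ ω hω]⟩
  obtain ⟨Q, hQ⟩ := exists_kernel_glue K₁ K₂
  refine ⟨fun ω => c ω • Q ω, measurable_smul_measure hcm Q.measurable, ?_⟩
  filter_upwards [hSP] with ω hω
  have hc0 : c ω ≠ 0 := by simp [hc]
  have hct : c ω ≠ ∞ := by simpa [hc] using (hS ω hω).2
  obtain ⟨q₁, q₂⟩ := hQ ω (by
    rw [e₁ ω hω, e₂ ω hω, Measure.fst, Measure.fst, Measure.map_smul, Measure.map_smul]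
    exact congrArg _ (hS ω hω).1)
  constructor
  · rw [Measure.map_smul, q₁, e₁ ω hω, smul_smul, ENNReal.mul_inv_cancel hc0 hct, one_smul]
  · rw [Measure.map_smul, q₂, e₂ ω hω, smul_smul, ENNReal.mul_inv_cancel hc0 hct, one_smul]

/-! ### Invariance and mass transport -/

lemma tsum_indicator_smul {M : Type*} [MetricSpace M] [MeasurableSpace M] {G : Type*} [Group G]
    [MulAction G M] {B0 : Set M} (hB0 : IsFundDom G B0) (x : M) :
    ∑' g : G, B0.indicator (1 : M → ℝ≥0∞) (g • x) = 1 := by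
  obtain ⟨g, hg, hu⟩ := hB0.2 x
  rw [tsum_eq_single g⁻¹]
  · simp [Set.mem_smul_set_iff_inv_smul_mem.1 hg]
  · intro h hh
    refine Set.indicator_of_notMem (fun hx => hh ?_) _
    have := hu h⁻¹ (by simpa [Set.mem_smul_set_iff_inv_smul_mem] using hx)
    rw [← this, inv_inv]

lemma setLIntegral_univ_prod {M : Type*} [MeasurableSpace M] {B0 : Set M}
    (hB : MeasurableSet B0) (F : M × M → ℝ≥0∞) (q : Measure (M × M)) :
    ∫⁻ z in Set.univ ×ˢ B0, F z ∂q = ∫⁻ z, B0.indicator 1 z.2 * F z ∂q := by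
  rw [← lintegral_indicator (MeasurableSet.univ.prod hB)]
  refine lintegral_congr fun z => ?_
  by_cases h : z.2 ∈ B0 <;> simp [Set.indicator, h]

lemma setLIntegral_prod_univ {M : Type*} [MeasurableSpace M] {B0 : Set M}
    (hB : MeasurableSet B0) (F : M × M → ℝ≥0∞) (q : Measure (M × M)) :
    ∫⁻ z in B0 ×ˢ Set.univ, F z ∂q = ∫⁻ z, B0.indicator 1 z.1 * F z ∂q := by
  rw [← lintegral_indicator (hB.prod MeasurableSet.univ)]
  refine lintegral_congr fun z => ?_
  by_cases h : z.1 ∈ B0 <;> simp [Set.indicator, h]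

lemma measurable_smul_prod {M : Type*} [MeasurableSpace M] {G : Type*} [Group G] [MulAction G M]
    (hg : ∀ g : G, Measurable fun x : M => g • x) (g : G) :
    Measurable fun z : M × M => (g • z.1, g • z.2) :=
  ((hg g).comp measurable_fst).prodMk ((hg g).comp measurable_snd)

lemma measurable_lintegral_random {Ω N : Type*} [MeasurableSpace Ω] [MeasurableSpace N]
    {q : Ω → Measure N} (hq : Measurable q) {F : N → ℝ≥0∞} (hF : Measurable F) :
    Measurable fun ω => ∫⁻ z, F z ∂(q ω) :=
  (Measure.measurable_lintegral hF).comp hq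

lemma lintegral_lintegral_flow {Ω : Type*} [MeasurableSpace Ω] {G : Type*} [Group G]
    {P : Measure Ω} {θ : G → Ω → Ω} (hθ : IsFlow θ) (hstat : Stationary θ P)
    {N : Type*} [MeasurableSpace N] {q : Ω → Measure N} (hq : Measurable q)
    {F : N → ℝ≥0∞} (hF : Measurable F) (g : G) :
    ∫⁻ ω, ∫⁻ z, F z ∂(q (θ g ω)) ∂P = ∫⁻ ω, ∫⁻ z, F z ∂(q ω) ∂P := by
  conv_rhs => rw [← hstat g]
  rw [lintegral_map (measurable_lintegral_random hq hF) (hθ.measurable g)]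

lemma lintegral_lintegral_smul {M : Type*} [MetricSpace M] [MeasurableSpace M]
    {Ω : Type*} [MeasurableSpace Ω] {G : Type*} [Group G] [MulAction G M]
    (hg : ∀ g : G, Measurable fun x : M => g • x)
    {P : Measure Ω} {θ : G → Ω → Ω} (hθ : IsFlow θ) (hstat : Stationary θ P)
    {q : Ω → Measure (M × M)} (hq : Measurable q) (hqe : EquivRandCoupling θ q)
    {F : M × M → ℝ≥0∞} (hF : Measurable F) (g : G) :
    ∫⁻ ω, ∫⁻ z, F (g • z.1, g • z.2) ∂(q ω) ∂P = ∫⁻ ω, ∫⁻ z, F z ∂(q ω) ∂P := by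
  rw [← lintegral_lintegral_flow hθ hstat hq hF g]
  refine lintegral_congr fun ω => ?_
  rw [hqe g ω, lintegral_map hF (measurable_smul_prod hg g)]

/-- Mass transport principle: the expected cost of the mass transported out of the fundamental
domain equals the expected cost of the mass transported into it. -/
lemma mass_transport {M : Type*} [MetricSpace M] [MeasurableSpace M]
    {Ω : Type*} [MeasurableSpace Ω] {G : Type*} [Group G] [Countable G] [MulAction G M]
    (hg : ∀ g : G, Measurable fun x : M => g • x)
    {B0 : Set M} (hB0 : IsFundDom G B0)
    {P : Measure Ω} {θ : G → Ω → Ω} (hθ : IsFlow θ) (hstat : Stationary θ P)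
    {q : Ω → Measure (M × M)} (hq : Measurable q) (hqe : EquivRandCoupling θ q)
    {F : M × M → ℝ≥0∞} (hF : Measurable F)
    (hFinv : ∀ (g : G) (z : M × M), F (g • z.1, g • z.2) = F z) :
    ∫⁻ ω, ∫⁻ z, B0.indicator 1 z.1 * F z ∂(q ω) ∂P =
      ∫⁻ ω, ∫⁻ z, B0.indicator 1 z.2 * F z ∂(q ω) ∂P := by
  set b : M → ℝ≥0∞ := B0.indicator 1 with hb
  have hbm : Measurable b := measurable_one.indicator hB0.1
  have hbg : ∀ g : G, Measurable fun x : M => b (g • x) := fun g => hbm.comp (hg g)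
  have hb1 := hbm.comp (measurable_fst : Measurable (Prod.fst : M × M → M))
  have hb2 := hbm.comp (measurable_snd : Measurable (Prod.snd : M × M → M))
  have hbg1 := fun g => (hbg g).comp (measurable_fst : Measurable (Prod.fst : M × M → M))
  have hbg2 := fun g => (hbg g).comp (measurable_snd : Measurable (Prod.snd : M × M → M))
  have key : ∀ H : G → M × M → ℝ≥0∞, (∀ g, Measurable (H g)) →
      ∫⁻ ω, ∫⁻ z, ∑' g, H g z ∂(q ω) ∂P = ∑' g, ∫⁻ ω, ∫⁻ z, H g z ∂(q ω) ∂P := by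
    intro H hH
    rw [← lintegral_tsum fun g => (measurable_lintegral_random hq (hH g)).aemeasurable]
    exact lintegral_congr fun ω => lintegral_tsum fun g => (hH g).aemeasurable
  calc ∫⁻ ω, ∫⁻ z, b z.1 * F z ∂(q ω) ∂P
      = ∫⁻ ω, ∫⁻ z, ∑' g : G, b (g • z.2) * (b z.1 * F z) ∂(q ω) ∂P := by
        refine lintegral_congr fun ω => lintegral_congr fun z => ?_
        rw [ENNReal.tsum_mul_right, tsum_indicator_smul hB0, one_mul]
    _ = ∑' g : G, ∫⁻ ω, ∫⁻ z, b (g • z.2) * (b z.1 * F z) ∂(q ω) ∂P :=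
        key _ fun g => (hbg2 g).mul (hb1.mul hF)
    _ = ∑' g : G, ∫⁻ ω, ∫⁻ z, b (g⁻¹ • z.1) * (b z.2 * F z) ∂(q ω) ∂P := by
        refine tsum_congr fun g => ?_
        rw [← lintegral_lintegral_smul hg hθ hstat hq hqe
          (F := fun z => b (g⁻¹ • z.1) * (b z.2 * F z)) ((hbg1 g⁻¹).mul (hb2.mul hF)) g]
        refine lintegral_congr fun ω => lintegral_congr fun z => ?_
        simp only [inv_smul_smul, hFinv]
        ring
    _ = ∑' g : G, ∫⁻ ω, ∫⁻ z, b (g • z.1) * (b z.2 * F z) ∂(q ω) ∂P :=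
        (Equiv.inv G).tsum_eq
          (fun g => ∫⁻ ω, ∫⁻ z, b (g • z.1) * (b z.2 * F z) ∂(q ω) ∂P)
    _ = ∫⁻ ω, ∫⁻ z, ∑' g : G, b (g • z.1) * (b z.2 * F z) ∂(q ω) ∂P :=
        (key _ fun g => (hbg1 g).mul (hb2.mul hF)).symm
    _ = ∫⁻ ω, ∫⁻ z, b z.2 * F z ∂(q ω) ∂P := by
        refine lintegral_congr fun ω => lintegral_congr fun z => ?_
        rw [ENNReal.tsum_mul_right, tsum_indicator_smul hB0, one_mul]

/-! ### Periodization -/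

/-- The equivariant random measure obtained by adding up all translates of a random measure
`R` on `M × M` along the flow. -/
noncomputable def periodize {M : Type*} [MeasurableSpace M] {Ω : Type*} {G : Type*} [Group G]
    [MulAction G M] (θ : G → Ω → Ω) (R : Ω → Measure (M × M)) (ω : Ω) : Measure (M × M) :=
  Measure.sum fun g : G => (R (θ g⁻¹ ω)).map fun z => (g • z.1, g • z.2)

section Periodize

set_option linter.unusedSectionVars false

variable {M : Type*} [MetricSpace M] [MeasurableSpace M] {Ω : Type*} [MeasurableSpace Ω]
  {G : Type*} [Group G] [MulAction G M] {P : Measure Ω} {θ : G → Ω → Ω}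
  {R : Ω → Measure (M × M)} {B0 : Set M}

lemma lintegral_periodize (hg : ∀ g : G, Measurable fun x : M => g • x)
    {F : M × M → ℝ≥0∞} (hF : Measurable F) (ω : Ω) :
    ∫⁻ z, F z ∂(periodize θ R ω) =
      ∑' g : G, ∫⁻ z, F (g • z.1, g • z.2) ∂(R (θ g⁻¹ ω)) := by
  rw [periodize, lintegral_sum_measure]
  exact tsum_congr fun g => lintegral_map hF (measurable_smul_prod hg g)

lemma measurable_periodize [Countable G] (hg : ∀ g : G, Measurable fun x : M => g • x)
    (hθ : IsFlow θ) (hR : Measurable R) : Measurable (periodize θ R) := by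
  refine Measure.measurable_of_measurable_coe _ fun s hs => ?_
  simp only [periodize, Measure.sum_apply _ hs]
  refine Measurable.tsum fun g => ?_
  exact (Measure.measurable_coe hs).comp
    ((Measure.measurable_map _ (measurable_smul_prod hg g)).comp
      (hR.comp (hθ.measurable g⁻¹)))

lemma equiv_periodize (hg : ∀ g : G, Measurable fun x : M => g • x) (hθ : IsFlow θ) :
    EquivRandCoupling θ (periodize θ R) := by
  intro h ω
  refine Measure.ext_of_lintegral _ fun F hF => ?_
  rw [lintegral_map hF (measurable_smul_prod hg h), lintegral_periodize hg hF,
    lintegral_periodize hg (F := fun z => F (h • z.1, h • z.2))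
      (hF.comp (measurable_smul_prod hg h)),
    ← (Equiv.mulLeft h).tsum_eq]
  refine tsum_congr fun g => ?_
  have e : θ (h * g)⁻¹ (θ h ω) = θ g⁻¹ ω := by
    rw [← Function.comp_apply (f := θ (h * g)⁻¹), hθ.map_mul]
    simp
  simp only [Equiv.coe_mulLeft, e, mul_smul]

/-- For an invariant cost, the expected cost of the periodization into the fundamental domain
is the full expected cost of `R`. -/
lemma cost_periodize [Countable G] (hg : ∀ g : G, Measurable fun x : M => g • x)
    (hB0 : IsFundDom G B0) (hθ : IsFlow θ) (hstat : Stationary θ P) (hR : Measurable R)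
    {F : M × M → ℝ≥0∞} (hF : Measurable F)
    (hFinv : ∀ (g : G) (z : M × M), F (g • z.1, g • z.2) = F z) :
    ∫⁻ ω, ∫⁻ z, B0.indicator 1 z.2 * F z ∂(periodize θ R ω) ∂P =
      ∫⁻ ω, ∫⁻ z, F z ∂(R ω) ∂P := by
  set b : M → ℝ≥0∞ := B0.indicator 1 with hb
  have hbm : Measurable b := measurable_one.indicator hB0.1
  have hm : ∀ g : G, Measurable fun z : M × M => b (g • z.2) * F z := fun g =>
    ((hbm.comp (hg g)).comp measurable_snd).mul hF
  calc ∫⁻ ω, ∫⁻ z, b z.2 * F z ∂(periodize θ R ω) ∂P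
      = ∫⁻ ω, ∑' g : G, ∫⁻ z, b (g • z.2) * F z ∂(R (θ g⁻¹ ω)) ∂P := by
        refine lintegral_congr fun ω => ?_
        rw [lintegral_periodize hg (F := fun z => b z.2 * F z)
          ((hbm.comp measurable_snd).mul hF)]
        simp only [hFinv]
    _ = ∑' g : G, ∫⁻ ω, ∫⁻ z, b (g • z.2) * F z ∂(R (θ g⁻¹ ω)) ∂P :=
        lintegral_tsum fun g => (measurable_lintegral_random
          (hR.comp (hθ.measurable g⁻¹)) (hm g)).aemeasurable
    _ = ∑' g : G, ∫⁻ ω, ∫⁻ z, b (g • z.2) * F z ∂(R ω) ∂P :=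
        tsum_congr fun g => lintegral_lintegral_flow hθ hstat hR (hm g) g⁻¹
    _ = ∫⁻ ω, ∑' g : G, ∫⁻ z, b (g • z.2) * F z ∂(R ω) ∂P :=
        (lintegral_tsum fun g =>
          (measurable_lintegral_random hR (hm g)).aemeasurable).symm
    _ = ∫⁻ ω, ∫⁻ z, F z ∂(R ω) ∂P := by
        refine lintegral_congr fun ω => ?_
        rw [← lintegral_tsum fun g => (hm g).aemeasurable]
        refine lintegral_congr fun z => ?_
        rw [ENNReal.tsum_mul_right, tsum_indicator_smul hB0, one_mul]

end Periodize

lemma ae_forall_flow {Ω : Type*} [MeasurableSpace Ω] {G : Type*} [Group G] [Countable G]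
    {P : Measure Ω} {θ : G → Ω → Ω} (hθ : IsFlow θ) (hstat : Stationary θ P)
    {p : Ω → Prop} (h : ∀ᵐ ω ∂P, p ω) : ∀ᵐ ω ∂P, ∀ g : G, p (θ g ω) :=
  ae_all_iff.2 fun g => ae_of_ae_map (hθ.measurable g).aemeasurable (by rwa [hstat g])

/-! ### Gluing of equivariant couplings -/

/-- Equivariant couplings can be composed, with the `L^p` triangle inequality for their costs.
The gluing over the common marginal `ξ` is performed for the mass of `ξ` in the fundamental
domain only, where it is almost surely finite; periodization then yields an equivariant coupling,
so no uniqueness of disintegrations is needed. -/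
lemma exists_glued_coupling
    {M : Type*} [MetricSpace M] [MeasurableSpace M] [BorelSpace M]
    [ProperSpace M] [SecondCountableTopology M] [Nonempty M]
    {Ω : Type*} [MeasurableSpace Ω]
    {G : Type*} [Group G] [Countable G] [MulAction G M]
    (hiso : ∀ g : G, Isometry (fun x : M => g • x))
    {B0 : Set M} (hB0 : IsFundDom G B0)
    {P : Measure Ω} {θ : G → Ω → Ω} (hθ : IsFlow θ) (hstat : Stationary θ P)
    {p : ℝ} (hp : 1 ≤ p) {lam mu ξ : Ω → Measure M}
    (hξ : ∀ᵐ ω ∂P, ξ ω B0 ≠ ∞)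
    {q₁ q₂ : Ω → Measure (M × M)}
    (h₁ : IsRandCoupling P lam ξ q₁) (he₁ : EquivRandCoupling θ q₁)
    (h₂ : IsRandCoupling P ξ mu q₂) (he₂ : EquivRandCoupling θ q₂) :
    ∃ q : Ω → Measure (M × M), IsRandCoupling P lam mu q ∧ EquivRandCoupling θ q ∧
      (∫⁻ ω, ∫⁻ z in Set.univ ×ˢ B0, edist z.1 z.2 ^ p ∂(q ω) ∂P) ^ (1 / p) ≤
        (∫⁻ ω, ∫⁻ z in Set.univ ×ˢ B0, edist z.1 z.2 ^ p ∂(q₁ ω) ∂P) ^ (1 / p) +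
        (∫⁻ ω, ∫⁻ z in Set.univ ×ˢ B0, edist z.1 z.2 ^ p ∂(q₂ ω) ∂P) ^ (1 / p) := by
  have hg : ∀ g : G, Measurable fun x : M => g • x := fun g => (hiso g).continuous.measurable
  have hD : Measurable fun z : M × M => edist z.1 z.2 ^ p := by fun_prop
  have hDinv : ∀ (g : G) (z : M × M), edist (g • z.1) (g • z.2) ^ p = edist z.1 z.2 ^ p :=
    fun g z => by rw [(hiso g).edist_eq]
  have hres : ∀ {q : Ω → Measure (M × M)} {A : Set (M × M)}, MeasurableSet A → Measurable q →
      Measurable fun ω => (q ω).restrict A := fun {q A} hA hq => by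
    refine Measure.measurable_of_measurable_coe _ fun s hs => ?_
    simp only [Measure.restrict_apply hs]
    exact (Measure.measurable_coe (hs.inter hA)).comp hq
  have hU : MeasurableSet ((Set.univ : Set M) ×ˢ B0) := MeasurableSet.univ.prod hB0.1
  have hV : MeasurableSet (B0 ×ˢ (Set.univ : Set M)) := hB0.1.prod MeasurableSet.univ
  -- glue the parts of `q₁` and `q₂` whose intermediate point lies in `B0`
  obtain ⟨Q, hQm, hQ⟩ := exists_random_glue P
    (κ₁ := fun ω => ((q₁ ω).restrict (Set.univ ×ˢ B0)).map Prod.swap)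
    (κ₂ := fun ω => (q₂ ω).restrict (B0 ×ˢ Set.univ))
    ((Measure.measurable_map _ measurable_swap).comp (hres hU h₁.1)) (hres hV h₂.1)
    (by
      filter_upwards [h₁.2, h₂.2] with ω c₁ c₂
      ext A hA
      have e : Prod.swap ⁻¹' (Prod.fst ⁻¹' A) ∩ Set.univ ×ˢ B0 =
          (Prod.snd ⁻¹' (A ∩ B0) : Set (M × M)) := by ext z; simp
      have e' : Prod.fst ⁻¹' A ∩ B0 ×ˢ Set.univ =
          (Prod.fst ⁻¹' (A ∩ B0) : Set (M × M)) := by ext z; simp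
      rw [Measure.fst_apply hA, Measure.fst_apply hA,
        Measure.map_apply measurable_swap (measurable_fst hA),
        Measure.restrict_apply (measurable_swap (measurable_fst hA)),
        Measure.restrict_apply (measurable_fst hA), e, e',
        ← Measure.snd_apply (hA.inter hB0.1), ← Measure.fst_apply (hA.inter hB0.1), c₁.2, c₂.1])
    (by
      filter_upwards [h₁.2, hξ] with ω c₁ hfin
      have e : (Set.univ ×ˢ B0 : Set (M × M)) = Prod.snd ⁻¹' B0 := by ext z; simp
      rw [Measure.map_apply measurable_swap MeasurableSet.univ, Set.preimage_univ,
        Measure.restrict_apply_univ, e, ← Measure.snd_apply hB0.1, c₁.2]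
      exact hfin)
  -- the marginals of `Q`, in terms of integrals
  have hQ₁ : ∀ᵐ ω ∂P, ∀ F : M × M → ℝ≥0∞, Measurable F →
      ∫⁻ t, F (t.2.1, t.1) ∂(Q ω) = ∫⁻ z, B0.indicator 1 z.2 * F z ∂(q₁ ω) := by
    filter_upwards [hQ] with ω hω F hF
    have := congrArg (fun ν => ∫⁻ z, F z.swap ∂ν) hω.1
    have hFs : Measurable fun z : M × M => F z.swap := hF.comp measurable_swap
    rw [lintegral_map hFs (by fun_prop), lintegral_map hFs measurable_swap] at this
    simpa [setLIntegral_univ_prod hB0.1] using this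
  have hQ₂ : ∀ᵐ ω ∂P, ∀ F : M × M → ℝ≥0∞, Measurable F →
      ∫⁻ t, F (t.1, t.2.2) ∂(Q ω) = ∫⁻ z, B0.indicator 1 z.1 * F z ∂(q₂ ω) := by
    filter_upwards [hQ] with ω hω F hF
    have := congrArg (fun ν => ∫⁻ z, F z ∂ν) hω.2
    rw [lintegral_map hF (by fun_prop)] at this
    simpa [setLIntegral_prod_univ hB0.1] using this
  have hRm : Measurable fun ω => (Q ω).map Prod.snd :=
    (Measure.measurable_map _ measurable_snd).comp hQm
  have hbm : Measurable (B0.indicator 1 : M → ℝ≥0∞) := measurable_one.indicator hB0.1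
  have hqe : ∀ {q : Ω → Measure (M × M)}, EquivRandCoupling θ q → ∀ (g : G) (ω : Ω)
      {F : M × M → ℝ≥0∞}, Measurable F →
      ∫⁻ z, F z ∂(q (θ g ω)) = ∫⁻ z, F (g • z.1, g • z.2) ∂(q ω) := fun he g ω F hF => by
    rw [he g ω, lintegral_map hF (measurable_smul_prod hg g)]
  have hsum : ∀ x : M, ∑' g : G, B0.indicator (1 : M → ℝ≥0∞) (g⁻¹ • x) = 1 := fun x => by
    rw [← tsum_indicator_smul hB0 x]
    exact (Equiv.inv G).tsum_eq fun g => B0.indicator (1 : M → ℝ≥0∞) (g • x)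
  refine ⟨periodize θ fun ω => (Q ω).map Prod.snd, ⟨measurable_periodize hg hθ hRm, ?_⟩,
    equiv_periodize hg hθ, ?_⟩
  · filter_upwards [h₁.2, h₂.2, ae_forall_flow hθ hstat hQ₁, ae_forall_flow hθ hstat hQ₂]
      with ω c₁ c₂ hω₁ hω₂
    constructor
    · refine Measure.ext_of_lintegral _ fun f hf => ?_
      have hf1 : Measurable fun z : M × M => f z.1 := hf.comp measurable_fst
      rw [← c₁.1, Measure.fst, Measure.fst, lintegral_map hf measurable_fst,
        lintegral_map hf measurable_fst, lintegral_periodize hg hf1]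
      calc _ = ∑' g : G, ∫⁻ z, B0.indicator 1 (g⁻¹ • z.2) * f z.1 ∂(q₁ ω) := by
            refine tsum_congr fun g => ?_
            have hfg : Measurable fun z : M × M => f (g • z.1) :=
              (hf.comp (hg g)).comp measurable_fst
            rw [lintegral_map hfg measurable_snd, hω₁ g⁻¹ _ hfg,
              hqe he₁ g⁻¹ ω (F := fun z => B0.indicator 1 z.2 * f (g • z.1))
                ((hbm.comp measurable_snd).mul hfg)]
            simp only [smul_inv_smul]
        _ = _ := by
            have hm : ∀ g : G, Measurable fun z : M × M =>
                B0.indicator 1 (g⁻¹ • z.2) * f z.1 := fun g =>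
              ((hbm.comp (hg g⁻¹)).comp measurable_snd).mul hf1
            rw [← lintegral_tsum fun g => (hm g).aemeasurable]
            refine lintegral_congr fun z => ?_
            rw [ENNReal.tsum_mul_right, hsum, one_mul]
    · refine Measure.ext_of_lintegral _ fun f hf => ?_
      have hf2 : Measurable fun z : M × M => f z.2 := hf.comp measurable_snd
      rw [← c₂.2, Measure.snd, Measure.snd, lintegral_map hf measurable_snd,
        lintegral_map hf measurable_snd, lintegral_periodize hg hf2]
      calc _ = ∑' g : G, ∫⁻ z, B0.indicator 1 (g⁻¹ • z.1) * f z.2 ∂(q₂ ω) := by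
            refine tsum_congr fun g => ?_
            have hfg : Measurable fun z : M × M => f (g • z.2) :=
              (hf.comp (hg g)).comp measurable_snd
            rw [lintegral_map hfg measurable_snd, hω₂ g⁻¹ _ hfg,
              hqe he₂ g⁻¹ ω (F := fun z => B0.indicator 1 z.1 * f (g • z.2))
                ((hbm.comp measurable_fst).mul hfg)]
            simp only [smul_inv_smul]
        _ = _ := by
            have hm : ∀ g : G, Measurable fun z : M × M =>
                B0.indicator 1 (g⁻¹ • z.1) * f z.2 := fun g =>
              ((hbm.comp (hg g⁻¹)).comp measurable_fst).mul hf2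
            rw [← lintegral_tsum fun g => (hm g).aemeasurable]
            refine lintegral_congr fun z => ?_
            rw [ENNReal.tsum_mul_right, hsum, one_mul]
  · simp only [setLIntegral_univ_prod hB0.1]
    rw [cost_periodize hg hB0 hθ hstat hRm hD hDinv,
      ← mass_transport hg hB0 hθ hstat h₂.1 he₂ hD hDinv]
    -- all three costs are integrals with respect to the averaged measure `P.bind Q`
    have hb : ∀ {F : M × (M × M) → ℝ≥0∞}, Measurable F →
        ∫⁻ t, F t ∂(P.bind Q) = ∫⁻ ω, ∫⁻ t, F t ∂(Q ω) ∂P := fun hF =>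
      Measure.lintegral_bind hQm.aemeasurable hF.aemeasurable
    have hf : Measurable fun t : M × (M × M) => edist t.2.1 t.1 := by fun_prop
    have hh : Measurable fun t : M × (M × M) => edist t.1 t.2.2 := by fun_prop
    have e₁ : ∫⁻ ω, ∫⁻ z, B0.indicator 1 z.2 * edist z.1 z.2 ^ p ∂(q₁ ω) ∂P =
        ∫⁻ t, edist t.2.1 t.1 ^ p ∂(P.bind Q) := by
      rw [hb (hf.pow_const p)]
      refine lintegral_congr_ae ?_
      filter_upwards [hQ₁] with ω hω using (hω _ hD).symm
    have e₂ : ∫⁻ ω, ∫⁻ z, B0.indicator 1 z.1 * edist z.1 z.2 ^ p ∂(q₂ ω) ∂P =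
        ∫⁻ t, edist t.1 t.2.2 ^ p ∂(P.bind Q) := by
      rw [hb (hh.pow_const p)]
      refine lintegral_congr_ae ?_
      filter_upwards [hQ₂] with ω hω using (hω _ hD).symm
    have e₃ : ∫⁻ ω, ∫⁻ z, edist z.1 z.2 ^ p ∂((Q ω).map Prod.snd) ∂P =
        ∫⁻ t, edist t.2.1 t.2.2 ^ p ∂(P.bind Q) := by
      rw [hb (by fun_prop)]
      exact lintegral_congr fun ω => lintegral_map hD measurable_snd
    rw [e₁, e₂, e₃]
    refine le_trans ?_ (ENNReal.lintegral_Lp_add_le hf.aemeasurable hh.aemeasurable hp)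
    have hp0 : 0 ≤ p := zero_le_one.trans hp
    gcongr with t
    exact edist_triangle _ _ _

/-! ### Vanishing cost -/

/-- If equivariant couplings of arbitrarily small cost exist, then the second random measure is
almost surely dominated by the first. Along a sequence `qₙ` of couplings with summable costs, the
costs of the mass transported into any translate of the fundamental domain tend to `0` almost
surely. For such `ω`, `δ > 0` and compact `K`, the inequality
`1_K(y) ≤ 1_{K^δ}(x) + δ⁻ᵖ d(x,y)ᵖ` integrated against `qₙ` gives `μ(K) ≤ λ(K^δ)`. -/
lemma ae_le_of_small_cost
    {M : Type*} [MetricSpace M] [MeasurableSpace M] [BorelSpace M]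
    [ProperSpace M] [SecondCountableTopology M]
    {Ω : Type*} [MeasurableSpace Ω]
    {G : Type*} [Group G] [Countable G] [MulAction G M]
    (hiso : ∀ g : G, Isometry (fun x : M => g • x))
    {B0 : Set M} (hB0 : IsFundDom G B0)
    {P : Measure Ω} {θ : G → Ω → Ω} (hθ : IsFlow θ) (hstat : Stationary θ P)
    {p : ℝ} (hp : 1 ≤ p) {lam mu : Ω → Measure M}
    (hlam : ∀ᵐ ω ∂P, IsFiniteMeasureOnCompacts (lam ω))
    (hmu : ∀ᵐ ω ∂P, IsFiniteMeasureOnCompacts (mu ω))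
    (h : ∀ ε > 0, ∃ q : Ω → Measure (M × M), IsRandCoupling P lam mu q ∧ EquivRandCoupling θ q ∧
      ∫⁻ ω, ∫⁻ z in Set.univ ×ˢ B0, edist z.1 z.2 ^ p ∂(q ω) ∂P < ε) :
    ∀ᵐ ω ∂P, mu ω ≤ lam ω := by
  have hg : ∀ g : G, Measurable fun x : M => g • x := fun g => (hiso g).continuous.measurable
  have hp0 : 0 < p := zero_lt_one.trans_le hp
  have hD : Measurable fun z : M × M => edist z.1 z.2 ^ p := by fun_prop
  have hbm : Measurable (B0.indicator 1 : M → ℝ≥0∞) := measurable_one.indicator hB0.1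
  have hF : ∀ g : G, Measurable fun z : M × M => B0.indicator 1 (g • z.2) * edist z.1 z.2 ^ p :=
    fun g => ((hbm.comp (hg g)).comp measurable_snd).mul hD
  obtain ⟨ε, hε, hεsum⟩ := ENNReal.exists_pos_sum_of_countable one_ne_zero ℕ
  choose q hqc hqe hqlt using fun n => h (ε n) (by exact_mod_cast hε n)
  have hlim : ∀ᵐ ω ∂P, ∀ g : G, Tendsto
      (fun n => ∫⁻ z, B0.indicator 1 (g • z.2) * edist z.1 z.2 ^ p ∂(q n ω)) atTop (𝓝 0) := by
    refine ae_all_iff.2 fun g => ?_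
    have hm := fun n => measurable_lintegral_random (hqc n).1 (hF g)
    have : ∫⁻ ω, ∑' n, ∫⁻ z, B0.indicator 1 (g • z.2) * edist z.1 z.2 ^ p ∂(q n ω) ∂P ≠ ∞ := by
      rw [lintegral_tsum fun n => (hm n).aemeasurable]
      refine ((ENNReal.tsum_le_tsum fun n => ?_).trans_lt (hεsum.trans one_lt_top)).ne
      refine le_trans (le_of_eq ?_) (hqlt n).le
      simp only [setLIntegral_univ_prod hB0.1]
      rw [← lintegral_lintegral_smul hg hθ hstat (hqc n).1 (hqe n)
        (F := fun z => B0.indicator 1 z.2 * edist z.1 z.2 ^ p)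
        ((hbm.comp measurable_snd).mul hD) g]
      simp only [(hiso g).edist_eq]
    filter_upwards [ae_lt_top (Measurable.tsum hm) this] with ω hω
    exact ENNReal.tendsto_atTop_zero_of_tsum_ne_top hω.ne
  filter_upwards [hlam, hmu, hlim, ae_all_iff.2 fun n => (hqc n).2] with ω hl hm hω hc
  have key : ∀ K : Set M, IsCompact K → mu ω K ≤ lam ω K := by
    intro K hK
    have hKm := hK.measurableSet
    have step : ∀ δ : ℝ, 0 < δ → mu ω K ≤ lam ω (Metric.cthickening δ K) := by
      intro δ hδ
      have hKδ : MeasurableSet (Metric.cthickening δ K) :=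
        Metric.isClosed_cthickening.measurableSet
      have hb : ∀ g : G, Measurable fun y : M =>
          B0.indicator (1 : M → ℝ≥0∞) (g • y) * K.indicator 1 y := fun g =>
        (hbm.comp (hg g)).mul (measurable_one.indicator hKm)
      have e : mu ω K = ∑' g : G, ∫⁻ y, B0.indicator 1 (g • y) * K.indicator 1 y ∂(mu ω) := by
        rw [← lintegral_tsum fun g => (hb g).aemeasurable, ← lintegral_indicator_one hKm]
        refine lintegral_congr fun y => ?_
        rw [ENNReal.tsum_mul_right, tsum_indicator_smul hB0, one_mul]
      rw [e, ENNReal.tsum_eq_iSup_sum]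
      refine iSup_le fun I => ?_
      set C : ℝ≥0∞ := (ENNReal.ofReal δ ^ p)⁻¹ with hC
      have hd0 : ENNReal.ofReal δ ^ p ≠ 0 := by
        simp [ENNReal.rpow_eq_zero_iff, hδ, hp0.not_gt]
      have hdt : ENNReal.ofReal δ ^ p ≠ ∞ := ENNReal.rpow_ne_top_of_nonneg hp0.le ofReal_ne_top
      have hCt : C ≠ ∞ := ENNReal.inv_ne_top.2 hd0
      have pt : ∀ z : M × M, K.indicator (1 : M → ℝ≥0∞) z.2 ≤
          (Metric.cthickening δ K).indicator 1 z.1 + C * edist z.1 z.2 ^ p := by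
        intro z
        by_cases hz : z.2 ∈ K
        · by_cases hd : edist z.1 z.2 ≤ ENNReal.ofReal δ
          · have : z.1 ∈ Metric.cthickening δ K :=
              (Metric.infEDist_le_edist_of_mem hz).trans hd
            simp [hz, this]
          · refine le_add_left ?_
            simp only [hz, Set.indicator_of_mem, Pi.one_apply]
            rw [← ENNReal.inv_mul_cancel hd0 hdt]
            gcongr
            exact (not_le.1 hd).le
        · simp [hz]
      have bound : ∀ n, ∑ g ∈ I, ∫⁻ y, B0.indicator 1 (g • y) * K.indicator 1 y ∂(mu ω) ≤
          lam ω (Metric.cthickening δ K) + C * ∑ g ∈ I,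
            ∫⁻ z, B0.indicator 1 (g • z.2) * edist z.1 z.2 ^ p ∂(q n ω) := by
        intro n
        have hI : ∀ y : M, ∑ g ∈ I, B0.indicator (1 : M → ℝ≥0∞) (g • y) ≤ 1 := fun y =>
          (ENNReal.sum_le_tsum I).trans (tsum_indicator_smul hB0 y).le
        calc ∑ g ∈ I, ∫⁻ y, B0.indicator 1 (g • y) * K.indicator 1 y ∂(mu ω)
            = ∫⁻ z, ∑ g ∈ I, B0.indicator 1 (g • z.2) * K.indicator 1 z.2 ∂(q n ω) := by
              have hb2 : ∀ g : G, Measurable fun z : M × M =>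
                  B0.indicator (1 : M → ℝ≥0∞) (g • z.2) * K.indicator 1 z.2 := fun g =>
                (hb g).comp measurable_snd
              rw [lintegral_finsetSum _ fun g _ => hb2 g]
              refine Finset.sum_congr rfl fun g _ => ?_
              rw [← (hc n).2, Measure.snd, lintegral_map (hb g) measurable_snd]
          _ ≤ ∫⁻ z, ((Metric.cthickening δ K).indicator 1 z.1 +
                C * ∑ g ∈ I, B0.indicator 1 (g • z.2) * edist z.1 z.2 ^ p) ∂(q n ω) := by
              refine lintegral_mono fun z => ?_
              simp only [← Finset.sum_mul]
              calc _ ≤ (∑ g ∈ I, B0.indicator (1 : M → ℝ≥0∞) (g • z.2)) *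
                    ((Metric.cthickening δ K).indicator 1 z.1 + C * edist z.1 z.2 ^ p) := by
                    gcongr; exact pt z
                _ = (∑ g ∈ I, B0.indicator (1 : M → ℝ≥0∞) (g • z.2)) *
                    (Metric.cthickening δ K).indicator 1 z.1 +
                    C * ((∑ g ∈ I, B0.indicator (1 : M → ℝ≥0∞) (g • z.2)) *
                      edist z.1 z.2 ^ p) := by ring
                _ ≤ _ := by
                    gcongr
                    exact mul_le_of_le_one_left' (hI z.2)
          _ = _ := by
              have hi : Measurable ((Metric.cthickening δ K).indicator (1 : M → ℝ≥0∞)) :=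
                measurable_one.indicator hKδ
              have hi1 : Measurable fun z : M × M =>
                  (Metric.cthickening δ K).indicator (1 : M → ℝ≥0∞) z.1 := hi.comp measurable_fst
              rw [lintegral_add_left hi1,
                lintegral_const_mul _ (Finset.measurable_fun_sum _ fun g _ => hF g),
                lintegral_finsetSum _ fun g _ => hF g, ← lintegral_indicator_one hKδ,
                ← (hc n).1, Measure.fst, lintegral_map hi measurable_fst]
      have lim : Tendsto (fun n => lam ω (Metric.cthickening δ K) + C * ∑ g ∈ I,
            ∫⁻ z, B0.indicator 1 (g • z.2) * edist z.1 z.2 ^ p ∂(q n ω)) atTop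
          (𝓝 (lam ω (Metric.cthickening δ K) + C * ∑ g ∈ I, 0)) :=
        tendsto_const_nhds.add
          (ENNReal.Tendsto.const_mul (tendsto_finsetSum _ fun g _ => hω g) (Or.inr hCt))
      simpa using ge_of_tendsto' lim bound
    have hT := tendsto_measure_cthickening_of_isClosed (μ := lam ω)
      ⟨1, one_pos, hK.cthickening.measure_lt_top.ne⟩ hK.isClosed
    refine ge_of_tendsto (hT.mono_left (nhdsWithin_le_nhds (s := Set.Ioi 0))) ?_
    filter_upwards [self_mem_nhdsWithin] with δ hδ using step δ hδ
  refine Measure.le_intro fun A hA _ => ?_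
  rw [hA.measure_eq_iSup_isCompact]
  exact iSup₂_le fun K hKA => iSup_le fun hK => (key K hK).trans (measure_mono hKA)

/-! ### The metric properties -/

lemma ae_ne_top_of_intensity {M : Type*} [MeasurableSpace M] {Ω : Type*} [MeasurableSpace Ω]
    {m : Measure M} {P : Measure Ω} {lam : Ω → Measure M} (hm : Measurable lam)
    (hint : HasIntensity m P lam 1) {A : Set M} (hA : MeasurableSet A) (hmA : m A ≠ ∞) :
    ∀ᵐ ω ∂P, lam ω A ≠ ∞ := by
  have h : ∫⁻ ω, lam ω A ∂P ≠ ∞ := by rw [hint A hA, one_mul]; exact hmA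
  filter_upwards [ae_lt_top ((Measure.measurable_coe hA).comp hm) h] with ω hω using hω.ne

lemma ae_finite_on_compacts {M : Type*} [MetricSpace M] [MeasurableSpace M] [BorelSpace M]
    [ProperSpace M] [Nonempty M] {Ω : Type*} [MeasurableSpace Ω]
    {m : Measure M} [IsLocallyFiniteMeasure m] {P : Measure Ω} {lam : Ω → Measure M}
    (hm : Measurable lam) (hint : HasIntensity m P lam 1) :
    ∀ᵐ ω ∂P, IsFiniteMeasureOnCompacts (lam ω) := by
  obtain ⟨x⟩ := ‹Nonempty M›
  have h : ∀ᵐ ω ∂P, ∀ n : ℕ, lam ω (Metric.closedBall x n) ≠ ∞ :=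
    ae_all_iff.2 fun n => ae_ne_top_of_intensity hm hint measurableSet_closedBall
      (isCompact_closedBall x n).measure_lt_top.ne
  filter_upwards [h] with ω hω
  refine ⟨fun K hK => ?_⟩
  obtain ⟨r, hr⟩ := hK.isBounded.subset_closedBall x
  obtain ⟨n, hn⟩ := exists_nat_ge r
  exact (measure_mono (hr.trans (Metric.closedBall_subset_closedBall hn))).trans_lt
    (hω n).lt_top

lemma Wp_le_swap {M : Type*} [MetricSpace M] [MeasurableSpace M] [BorelSpace M]
    [SecondCountableTopology M] {Ω : Type*} [MeasurableSpace Ω]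
    {G : Type*} [Group G] [Countable G] [MulAction G M]
    (hiso : ∀ g : G, Isometry (fun x : M => g • x))
    {B0 : Set M} (hB0 : IsFundDom G B0)
    {P : Measure Ω} {θ : G → Ω → Ω} (hθ : IsFlow θ) (hstat : Stationary θ P)
    {p : ℝ} (hp : 1 ≤ p) (lam mu : Ω → Measure M) :
    Wp P θ B0 p lam mu ≤ Wp P θ B0 p mu lam := by
  have hg : ∀ g : G, Measurable fun x : M => g • x := fun g => (hiso g).continuous.measurable
  have hp0 : 0 < p := zero_lt_one.trans_le hp
  have hD : Measurable fun z : M × M => edist z.1 z.2 ^ p := by fun_prop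
  refine ENNReal.rpow_le_rpow ?_ (by positivity)
  refine le_iInf₂ fun q hq => ?_
  obtain ⟨⟨hqm, hqc⟩, hqe⟩ := hq
  refine (iInf₂_le (fun ω => (q ω).map Prod.swap) ⟨⟨?_, ?_⟩, ?_⟩).trans (le_of_eq ?_)
  rotate_left
  · exact (Measure.measurable_map _ measurable_swap).comp hqm
  · filter_upwards [hqc] with ω hω
    exact ⟨by rw [Measure.fst_map_swap, hω.2], by rw [Measure.snd_map_swap, hω.1]⟩
  · intro g ω
    simp only
    rw [hqe g ω, Measure.map_map measurable_swap (measurable_smul_prod hg g),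
      Measure.map_map (measurable_smul_prod hg g) measurable_swap]
    rfl
  · simp only [setLIntegral_univ_prod hB0.1]
    rw [← mass_transport hg hB0 hθ hstat hqm hqe hD fun g z => by rw [(hiso g).edist_eq]]
    refine lintegral_congr fun ω => ?_
    have hm : Measurable fun z : M × M => B0.indicator 1 z.2 * edist z.1 z.2 ^ p :=
      ((measurable_one.indicator hB0.1).comp measurable_snd).mul hD
    rw [lintegral_map hm measurable_swap]
    simp only [Prod.fst_swap, Prod.snd_swap, edist_comm]


/-- `𝕎_p` is a metric on equivariant random measures of unit intensity:
vanishing iff the measures agree a.s., symmetry, and the triangle inequality. -/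
theorem Wp_metric_properties
    {M : Type*} [MetricSpace M] [MeasurableSpace M] [BorelSpace M]
    [ProperSpace M] [SecondCountableTopology M]
    {Ω : Type*} [MetricSpace Ω] [CompactSpace Ω] [MeasurableSpace Ω] [BorelSpace Ω]
    (G : Type*) [Group G] [Countable G] [MulAction G M]
    (m : Measure M) [IsLocallyFiniteMeasure m]
    (hiso : ∀ g : G, Isometry (fun x : M => g • x))
    (hmp : ∀ g : G, MeasurePreserving (fun x : M => g • x) m m)
    (hpd : ProperlyDiscontinuousAct (M := M) G) (hcc : CocompactAct (M := M) G)
    (hfree : FreeAct (M := M) G)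
    (B0 : Set M) (hB0 : IsFundDom G B0) (hB0vol : m B0 = 1)
    (P : Measure Ω) [IsProbabilityMeasure P]
    (θ : G → Ω → Ω) (hθ : IsFlow θ) (hstat : Stationary θ P)
    (p : ℝ) (hp : 1 ≤ p)
    (lam mu ξ : Ω → Measure M)
    (hlammeas : Measurable lam) (hmumeas : Measurable mu) (hξmeas : Measurable ξ)
    (hlameq : EquivRandMeasure θ lam) (hmueq : EquivRandMeasure θ mu)
    (hξeq : EquivRandMeasure θ ξ)
    (hlamint : HasIntensity m P lam 1) (hmuint : HasIntensity m P mu 1)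
    (hξint : HasIntensity m P ξ 1)
    -- finiteness of the relevant transportation costs
    (hfin₁ : Wp P θ B0 p lam ξ ≠ ⊤) (hfin₂ : Wp P θ B0 p ξ mu ≠ ⊤) :
    -- (i)
    (Wp P θ B0 p lam mu = 0 ↔ ∀ᵐ ω ∂P, lam ω = mu ω) ∧
    -- (ii)
    Wp P θ B0 p lam mu = Wp P θ B0 p mu lam ∧
    -- (iii)
    Wp P θ B0 p lam mu ≤ Wp P θ B0 p lam ξ + Wp P θ B0 p ξ mu := by
  have hg : ∀ g : G, Measurable fun x : M => g • x := fun g => (hiso g).continuous.measurable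
  have hp0 : 0 < p := zero_lt_one.trans_le hp
  have : Nonempty M := by
    by_contra hne
    rw [not_nonempty_iff] at hne
    simp [Measure.eq_zero_of_isEmpty m] at hB0vol
  have hsymm : Wp P θ B0 p lam mu = Wp P θ B0 p mu lam :=
    le_antisymm (Wp_le_swap hiso hB0 hθ hstat hp _ _) (Wp_le_swap hiso hB0 hθ hstat hp _ _)
  have hle : ∀ {α β : Ω → Measure M}, Measurable α → Measurable β →
      HasIntensity m P α 1 → HasIntensity m P β 1 → Wp P θ B0 p α β = 0 →
      ∀ᵐ ω ∂P, β ω ≤ α ω := by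
    intro α β hα hβ hαi hβi h0
    refine ae_le_of_small_cost hiso hB0 hθ hstat hp (ae_finite_on_compacts hα hαi)
      (ae_finite_on_compacts hβ hβi) fun ε hε => ?_
    rw [Wp, ENNReal.rpow_eq_zero_iff_of_pos (by positivity)] at h0
    obtain ⟨q, hq⟩ := iInf_lt_iff.1 (h0.trans_lt hε)
    obtain ⟨hq, hlt⟩ := iInf_lt_iff.1 hq
    exact ⟨q, hq.1, hq.2, hlt⟩
  refine ⟨⟨fun h0 => ?_, fun h => ?_⟩, hsymm, ?_⟩
  · filter_upwards [hle hlammeas hmumeas hlamint hmuint h0,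
      hle hmumeas hlammeas hmuint hlamint (hsymm ▸ h0)] with ω h₁ h₂ using le_antisymm h₂ h₁
  · -- the diagonal coupling has cost zero
    rw [Wp, ENNReal.rpow_eq_zero_iff_of_pos (by positivity), ← nonpos_iff_eq_zero]
    have hd : Measurable fun x : M => (x, x) := measurable_id.prodMk measurable_id
    refine (iInf₂_le (fun ω => (lam ω).map fun x => (x, x)) ⟨⟨?_, ?_⟩, ?_⟩).trans (le_of_eq ?_)
    rotate_left
    · exact (Measure.measurable_map _ hd).comp hlammeas
    · filter_upwards [h] with ω hω
      constructor
      · rw [Measure.fst, Measure.map_map measurable_fst hd]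
        exact Measure.map_id
      · rw [Measure.snd, Measure.map_map measurable_snd hd, ← hω]
        exact Measure.map_id
    · intro g ω
      simp only
      rw [hlameq g ω, Measure.map_map hd (hg g), Measure.map_map (measurable_smul_prod hg g) hd]
      rfl
    · have hD : Measurable fun z : M × M => edist z.1 z.2 ^ p := by fun_prop
      have hm : Measurable fun z : M × M => B0.indicator 1 z.2 * edist z.1 z.2 ^ p :=
        ((measurable_one.indicator hB0.1).comp measurable_snd).mul hD
      simp only [setLIntegral_univ_prod hB0.1, lintegral_map hm hd]
      simp [hp0]
  · have hξB : ∀ᵐ ω ∂P, ξ ω B0 ≠ ∞ :=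
      ae_ne_top_of_intensity hξmeas hξint hB0.1 (by simp [hB0vol])
    -- the power `1 / p` is an order isomorphism, hence commutes with the infimum
    have hW : ∀ α β : Ω → Measure M, Wp P θ B0 p α β =
        ⨅ q : {q : Ω → Measure (M × M) // IsRandCoupling P α β q ∧ EquivRandCoupling θ q},
          (∫⁻ ω, ∫⁻ z in Set.univ ×ˢ B0, edist z.1 z.2 ^ p ∂(q.1 ω) ∂P) ^ (1 / p) := by
      intro α β
      rw [Wp, iInf_subtype']
      exact (ENNReal.orderIsoRpow (1 / p) (by positivity)).map_iInf _
    rw [hW lam ξ, hW ξ mu, ENNReal.iInf_add]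
    refine le_iInf fun q₁ => ?_
    rw [ENNReal.add_iInf]
    refine le_iInf fun q₂ => ?_
    obtain ⟨q, hq, hqe, hle⟩ := exists_glued_coupling hiso hB0 hθ hstat hp hξB
      q₁.2.1 q₁.2.2 q₂.2.1 q₂.2.2
    rw [hW lam mu]
    exact (iInf_le _ ⟨q, hq, hqe⟩).trans hle
end
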